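/- arXiv:2506.01030 — 2 statements merged into one kernel-verified Lean document; each statement's English description precedes it below -/
import Mathlib

section
/- Under Condition (★), the sum over ordered pairs (p, q) of prime elements with N(p)·N(q) ≤ x of 1/(N(p)·N(q)) equals (log log x)² + 2𝔄·log log x + 𝔄² + 𝔅 + O(log log x/log x) as x → ∞, where the implied constant depends only on the data P, N, κ, θ. -/
open Filter Topology Asymptotics
open scoped Classical

noncomputable section

/-- The norm on the free abelian monoid `P →₀ ℕ`, extended multiplicatively
from the norm `N` on the prime elements. -/
def Nm {P : Type*} (N : P → ℕ) (m : P →₀ ℕ) : ℕ :=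
  m.prod fun p k => N p ^ k

/-- The number of distinct prime elements generating `m`. -/
def omegaM {P : Type*} (m : P →₀ ℕ) : ℕ := m.support.card

/-- `m` is `h`-free: every multiplicity is at most `h - 1`. -/
def HFree {P : Type*} (h : ℕ) (m : P →₀ ℕ) : Prop := ∀ p, m p ≤ h - 1

/-- `m` is `h`-full: every nonzero multiplicity is at least `h`. -/
def HFull {P : Type*} (h : ℕ) (m : P →₀ ℕ) : Prop := ∀ p, m p = 0 ∨ h ≤ m p

/-- Condition (★): `#{m : N(m) ≤ x} = κ·x + O(x^θ)` with `κ > 0`, `0 ≤ θ < 1`. -/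
def StarCond {P : Type*} (N : P → ℕ) (κ θ : ℝ) : Prop :=
  0 < κ ∧ 0 ≤ θ ∧ θ < 1 ∧
    (fun x : ℝ => (({m : P →₀ ℕ | (Nm N m : ℝ) ≤ x}.ncard : ℝ) - κ * x))
      =O[atTop] fun x : ℝ => x ^ θ

/-- The generalized zeta function `ζ_M(s) = ∑_m N(m)^{-s}`. -/
def zetaM {P : Type*} (N : P → ℕ) (s : ℝ) : ℝ :=
  ∑' m : P →₀ ℕ, 1 / (Nm N m : ℝ) ^ s

/-- The constant `γ_h`. -/
def gammah {P : Type*} (N : P → ℕ) (h : ℕ) : ℝ :=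
  ∏' p : P, (1 + ((N p : ℝ) - (N p : ℝ) ^ (1 / (h : ℝ))) /
    ((N p : ℝ) ^ 2 * ((N p : ℝ) ^ (1 / (h : ℝ)) - 1)))

/-- `A` is the Mertens constant `𝔄` of the prime system:
`𝔄 = lim (∑_{N(p) ≤ x} 1/N(p) − log log x)`. -/
def IsMertens {P : Type*} (N : P → ℕ) (A : ℝ) : Prop :=
  Tendsto (fun x : ℝ =>
      (∑ᶠ p ∈ {p : P | (N p : ℝ) ≤ x}, 1 / (N p : ℝ)) - Real.log (Real.log x))
    atTop (𝓝 A)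

/-- The constant `𝔅 = -π²/6`. -/
def Bconst : ℝ := -(Real.pi ^ 2) / 6

/-- The constant `ℭ₁`, given the Mertens constant `A`. -/
def C1const {P : Type*} (N : P → ℕ) (h : ℕ) (A : ℝ) : ℝ :=
  A - ∑' p : P, ((N p : ℝ) - 1) / ((N p : ℝ) * ((N p : ℝ) ^ h - 1))

/-- The constant `ℭ₂`, given the Mertens constant `A`. -/
def C2const {P : Type*} (N : P → ℕ) (h : ℕ) (A : ℝ) : ℝ :=
  C1const N h A ^ 2 + C1const N h A + Bconst -
    ∑' p : P, (((N p : ℝ) ^ (h - 1) - 1) / ((N p : ℝ) ^ h - 1)) ^ 2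

/-- The convergent series `𝔏_h(r)`. -/
def LhSum {P : Type*} (N : P → ℕ) (h : ℕ) (r : ℝ) : ℝ :=
  ∑' p : P, 1 / ((N p : ℝ) ^ (r / (h : ℝ) - 1) *
    ((N p : ℝ) - (N p : ℝ) ^ (1 - 1 / (h : ℝ)) + 1))

/-- The constant `𝔇₁`, given the Mertens constant `A`. -/
def D1const {P : Type*} (N : P → ℕ) (h : ℕ) (A : ℝ) : ℝ :=
  A - Real.log (h : ℝ) + LhSum N h ((h : ℝ) + 1) - LhSum N h (2 * (h : ℝ))

/-- The constant `𝔇₂`, given the Mertens constant `A`. -/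
def D2const {P : Type*} (N : P → ℕ) (h : ℕ) (A : ℝ) : ℝ :=
  D1const N h A ^ 2 + D1const N h A + Bconst -
    ∑' p : P, (1 / ((N p : ℝ) - (N p : ℝ) ^ (1 - 1 / (h : ℝ)) + 1)) ^ 2

/-- The error term `R_{S_h}(x)` for `h`-free counts. -/
def RSfree (h : ℕ) (θ : ℝ) (x : ℝ) : ℝ :=
  if 1 / (h : ℝ) < θ then x ^ θ
  else if 1 / (h : ℝ) = θ then x ^ (1 / (h : ℝ)) * Real.log x
  else x ^ (1 / (h : ℝ))

/-- The error term `R_{N_h}(x)` for `h`-full counts. -/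
def RNfull (h : ℕ) (θ : ℝ) (x : ℝ) : ℝ :=
  if (h : ℝ) / ((h : ℝ) + 1) < θ then x ^ (θ / (h : ℝ))
  else if ∃ i : ℕ, 1 ≤ i ∧ i ≤ h - 1 ∧ θ = (h : ℝ) / ((h : ℝ) + (i : ℝ)) then
    x ^ (1 / ((h : ℝ) + 1)) * Real.log x
  else x ^ (1 / ((h : ℝ) + 1))

/-- fiberwise rewriting -/
theorem pp_fiber {ι : Type*} (ν : ι → ℕ) (B : ℝ → Finset ι)
    (hB : ∀ x i, i ∈ B x ↔ (ν i : ℝ) ≤ x) (w : ι → ℝ) (g : ℝ → ℝ) (x : ℝ) (hx : 0 ≤ x) :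
    ∑ i ∈ B x, w i * g (ν i) =
      ∑ k ∈ Finset.Icc 0 ⌊x⌋₊, g k * ∑ i ∈ (B k).filter (fun i => ν i = k), w i := by
  have hm : ∀ i ∈ B x, ν i ∈ Finset.Icc 0 ⌊x⌋₊ := by
    intro i hi
    rw [hB] at hi
    simp [Nat.le_floor hi]
  rw [← Finset.sum_fiberwise_of_maps_to hm]
  refine Finset.sum_congr rfl fun k hk => ?_
  rw [Finset.mul_sum]
  have hk' : (k : ℝ) ≤ x := by
    have := (Finset.mem_Icc.mp hk).2
    exact (Nat.le_floor_iff hx).mp this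
  have : (B x).filter (fun i => ν i = k) = (B k).filter (fun i => ν i = k) := by
    ext i
    simp only [Finset.mem_filter, hB]
    constructor
    · rintro ⟨_, h⟩; exact ⟨by rw [h], h⟩
    · rintro ⟨_, h⟩; exact ⟨by rw [h]; exact hk', h⟩
  rw [this]
  refine Finset.sum_congr rfl fun i hi => ?_
  rw [(Finset.mem_filter.mp hi).2]; ring

/-- Abel summation with error term. -/
theorem pp_abel {ι : Type*} (ν : ι → ℕ) (B : ℝ → Finset ι)
    (hB : ∀ x i, i ∈ B x ↔ (ν i : ℝ) ≤ x) (w : ι → ℝ) (g g' V V' Q e K k : ℝ → ℝ)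
    (a b : ℝ) (ha : 0 ≤ a) (hab : a ≤ b)
    (hg : ∀ t ∈ Set.Icc a b, HasDerivAt g (g' t) t)
    (hV : ∀ t ∈ Set.Icc a b, HasDerivAt V (V' t) t)
    (hQ : ∀ t ∈ Set.Icc a b, HasDerivAt Q (g t * V' t) t)
    (hK : ∀ t ∈ Set.Icc a b, HasDerivAt K (k t) t)
    (hg' : ContinuousOn g' (Set.Icc a b))
    (hV' : ContinuousOn V' (Set.Icc a b))
    (hk' : ContinuousOn k (Set.Icc a b))
    (hE : ∀ t ∈ Set.Icc a b, |(∑ i ∈ B t, w i) - V t| ≤ e t)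
    (hke : ∀ t ∈ Set.Icc a b, |g' t| * e t ≤ k t) :
    |(∑ i ∈ B b, w i * g (ν i)) - (∑ i ∈ B a, w i * g (ν i)) - (Q b - Q a)|
      ≤ |g b| * e b + |g a| * e a + (K b - K a) := by
  set c : ℕ → ℝ := fun k => ∑ i ∈ (B k).filter (fun i => ν i = k), w i with hc
  have hW : ∀ t, 0 ≤ t → ∑ i ∈ B t, w i = ∑ k ∈ Finset.Icc 0 ⌊t⌋₊, c k := by
    intro t ht
    have := pp_fiber ν B hB w (fun _ => 1) t ht
    simpa using this
  have hb : 0 ≤ b := ha.trans hab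
  have hgc : ContinuousOn g (Set.Icc a b) := fun t ht => (hg t ht).continuousAt.continuousWithinAt
  have hVc : ContinuousOn V (Set.Icc a b) := fun t ht => (hV t ht).continuousAt.continuousWithinAt
  have hu : Set.uIcc a b = Set.Icc a b := Set.uIcc_of_le hab
  have hdint : MeasureTheory.IntegrableOn (deriv g) (Set.Icc a b) := by
    refine (hg'.integrableOn_Icc).congr_fun (fun t ht => ((hg t ht).deriv).symm) measurableSet_Icc
  have hab1 := sum_mul_eq_sub_sub_integral_mul (f := g) c ha hab
    (fun t ht => (hg t ht).differentiableAt) hdint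
  have hs : ∑ k ∈ Finset.Ioc ⌊a⌋₊ ⌊b⌋₊, g k * c k =
      (∑ i ∈ B b, w i * g (ν i)) - (∑ i ∈ B a, w i * g (ν i)) := by
    rw [pp_fiber ν B hB w g b hb, pp_fiber ν B hB w g a ha]
    have hfl : ⌊a⌋₊ ≤ ⌊b⌋₊ := Nat.floor_le_floor hab
    have : Finset.Icc 0 ⌊b⌋₊ = Finset.Icc 0 ⌊a⌋₊ ∪ Finset.Ioc ⌊a⌋₊ ⌊b⌋₊ := by
      ext i; simp only [Finset.mem_Icc, Finset.mem_union, Finset.mem_Ioc]; omega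
    rw [this, Finset.sum_union]
    · ring
    · rw [Finset.disjoint_left]; intro i; simp only [Finset.mem_Icc, Finset.mem_Ioc]; omega
  have hint1 := integrableOn_mul_sum_Icc (m := 0) c ha hdint
  have hint1' : IntervalIntegrable (fun t => deriv g t * ∑ k ∈ Finset.Icc 0 ⌊t⌋₊, c k)
      MeasureTheory.volume a b := (intervalIntegrable_iff_integrableOn_Icc_of_le hab).mpr hint1
  have hint2 : IntervalIntegrable (fun t => g' t * V t) MeasureTheory.volume a b :=
    (hg'.mul hVc).intervalIntegrable_of_Icc hab
  have hint3 : IntervalIntegrable (fun t => g t * V' t) MeasureTheory.volume a b :=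
    (hgc.mul hV').intervalIntegrable_of_Icc hab
  have hint4 : IntervalIntegrable k MeasureTheory.volume a b :=
    hk'.intervalIntegrable_of_Icc hab
  have iQ : ∫ t in a..b, g t * V' t = Q b - Q a :=
    intervalIntegral.integral_eq_sub_of_hasDerivAt (fun t ht => hQ t (hu ▸ ht)) hint3
  have iK : ∫ t in a..b, k t = K b - K a :=
    intervalIntegral.integral_eq_sub_of_hasDerivAt (fun t ht => hK t (hu ▸ ht)) hint4
  have iP : ∫ t in a..b, (g' t * V t + g t * V' t) = g b * V b - g a * V a :=
    intervalIntegral.integral_eq_sub_of_hasDerivAt (f := fun t => g t * V t)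
      (fun t ht => (hg t (hu ▸ ht)).mul (hV t (hu ▸ ht))) (hint2.add hint3)
  rw [intervalIntegral.integral_add hint2 hint3, iQ] at iP
  have iE : ∫ t in a..b, ((deriv g t * ∑ k ∈ Finset.Icc 0 ⌊t⌋₊, c k) - g' t * V t) =
      (∫ t in a..b, deriv g t * ∑ k ∈ Finset.Icc 0 ⌊t⌋₊, c k) - ∫ t in a..b, g' t * V t :=
    intervalIntegral.integral_sub hint1' hint2
  have bE : |∫ t in a..b, ((deriv g t * ∑ k ∈ Finset.Icc 0 ⌊t⌋₊, c k) - g' t * V t)|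
      ≤ K b - K a := by
    rw [← iK, ← Real.norm_eq_abs]
    refine intervalIntegral.norm_integral_le_of_norm_le hab ?_ hint4
    refine Filter.Eventually.of_forall fun t ht => ?_
    have ht' : t ∈ Set.Icc a b := ⟨ht.1.le, ht.2⟩
    rw [(hg t ht').deriv, ← hW t (ha.trans ht'.1), ← mul_sub, norm_mul, Real.norm_eq_abs,
      Real.norm_eq_abs]
    exact (mul_le_mul_of_nonneg_left (hE t ht') (abs_nonneg _)).trans (hke t ht')
  rw [hs, ← hW b hb, ← hW a ha, ← intervalIntegral.integral_of_le hab] at hab1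
  rw [hab1]
  have e1 : |g b * ((∑ i ∈ B b, w i) - V b)| ≤ |g b| * e b := by
    rw [abs_mul]
    exact mul_le_mul_of_nonneg_left (hE b ⟨hab, le_rfl⟩) (abs_nonneg _)
  have e2 : |g a * ((∑ i ∈ B a, w i) - V a)| ≤ |g a| * e a := by
    rw [abs_mul]
    exact mul_le_mul_of_nonneg_left (hE a ⟨le_rfl, hab⟩) (abs_nonneg _)
  rw [iE] at bE
  rw [abs_le] at *
  constructor <;> linarith [e1.1, e1.2, e2.1, e2.2, bE.1, bE.2]

theorem pp_cauchy (Φ ε : ℝ → ℝ) (a₀ : ℝ) (hε : Tendsto ε atTop (𝓝 0))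
    (h : ∀ a b, a₀ ≤ a → a ≤ b → |Φ b - Φ a| ≤ ε a) :
    ∃ c, ∀ a, a₀ ≤ a → |Φ a - c| ≤ ε a := by
  have hC : CauchySeq Φ := by
    rw [Metric.cauchySeq_iff']
    intro δ hδ
    obtain ⟨n, hn1, hn2⟩ := ((hε.eventually (gt_mem_nhds hδ)).and (eventually_ge_atTop a₀)).exists
    refine ⟨n, fun m hm => ?_⟩
    rw [Real.dist_eq]
    exact (h n m hn2 hm).trans_lt hn1
  obtain ⟨c, hc⟩ := cauchySeq_tendsto_of_complete hC
  refine ⟨c, fun a ha => ?_⟩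
  have h1 : Tendsto (fun b => |Φ b - Φ a|) atTop (𝓝 |c - Φ a|) :=
    (hc.sub_const _).abs
  rw [abs_sub_comm]
  exact le_of_tendsto h1 ((eventually_ge_atTop a).mono fun b hb => h a b ha hb)

/-- dilogarithm -/
def ppLi (z : ℝ) : ℝ := ∑' n : ℕ, z ^ (n + 1) / ((n : ℝ) + 1) ^ 2

theorem ppLi_summable0 : Summable fun n : ℕ => 1 / ((n : ℝ) + 1) ^ 2 := by
  have := (summable_nat_add_iff 1).mpr (Real.summable_one_div_nat_pow.mpr (by norm_num : 1 < 2))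
  simpa using this

theorem ppLi_one : ∑' n : ℕ, 1 / ((n : ℝ) + 1) ^ 2 = Real.pi ^ 2 / 6 := by
  have h := hasSum_zeta_two
  have h2 := (hasSum_nat_add_iff' 1).mpr h
  simp at h2
  simpa using h2.tsum_eq

theorem ppLi_term {z : ℝ} (h0 : 0 ≤ z) (h1 : z ≤ 1) (n : ℕ) :
    ‖z ^ (n + 1) / ((n : ℝ) + 1) ^ 2‖ ≤ z * (1 / ((n : ℝ) + 1) ^ 2) := by
  rw [Real.norm_eq_abs, abs_of_nonneg (by positivity), pow_succ', mul_div_assoc]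
  gcongr
  exact pow_le_one₀ h0 h1

theorem ppLi_summable {z : ℝ} (h0 : 0 ≤ z) (h1 : z ≤ 1) :
    Summable fun n : ℕ => z ^ (n + 1) / ((n : ℝ) + 1) ^ 2 :=
  Summable.of_norm_bounded (ppLi_summable0.mul_left z) (ppLi_term h0 h1)

theorem ppLi_bound {z : ℝ} (h0 : 0 ≤ z) (h1 : z ≤ 1) : |ppLi z| ≤ z * (Real.pi ^ 2 / 6) := by
  rw [← ppLi_one, ← tsum_mul_left, ← Real.norm_eq_abs]
  exact tsum_of_norm_bounded (ppLi_summable0.mul_left z).hasSum (ppLi_term h0 h1)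

theorem ppLi_cont : ContinuousOn ppLi (Set.Icc 0 1) := by
  refine continuousOn_tsum (u := fun n : ℕ => 1 / ((n : ℝ) + 1) ^ 2) (fun n => by fun_prop)
    ppLi_summable0 ?_
  rintro n z ⟨h0, h1⟩
  refine (ppLi_term h0 h1 n).trans ?_
  exact mul_le_of_le_one_left (by positivity) h1

theorem ppLi_deriv {z : ℝ} (h0 : 0 < z) (h1 : z < 1) :
    HasDerivAt ppLi (-Real.log (1 - z) / z) z := by
  obtain ⟨r, hr1, hr2⟩ := exists_between h1
  have hr0 : 0 < r := h0.trans hr1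
  have key := hasDerivAt_tsum_of_isPreconnected
    (g := fun (n : ℕ) (y : ℝ) => y ^ (n + 1) / ((n : ℝ) + 1) ^ 2)
    (g' := fun (n : ℕ) (y : ℝ) => y ^ n / ((n : ℝ) + 1))
    (u := fun n : ℕ => r ^ n) (t := Set.Ioo 0 r) (y₀ := z) (y := z)
    (summable_geometric_of_lt_one hr0.le hr2) isOpen_Ioo isPreconnected_Ioo ?_ ?_ ⟨h0, hr1⟩
    (ppLi_summable h0.le h1.le) ⟨h0, hr1⟩
  · have hs := Real.hasSum_pow_div_log_of_abs_lt_one (x := z) (by rw [abs_of_pos h0]; exact h1)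
    have hs2 : HasSum (fun n : ℕ => z ^ n / ((n : ℝ) + 1)) (-Real.log (1 - z) / z) := by
      have := hs.div_const z
      refine this.congr_fun ?_
      intro n
      field_simp
      ring
    rw [hs2.tsum_eq] at key
    exact key
  · intro n y hy
    have := (hasDerivAt_pow (n + 1) y).div_const (((n : ℝ) + 1) ^ 2)
    convert! this using 1
    push_cast
    field_simp
  · intro n y hy
    rw [Real.norm_eq_abs, abs_of_nonneg (by have := hy.1; positivity)]
    refine (div_le_self (by have := hy.1; positivity) (by linarith [n.cast_nonneg (α := ℝ)])).trans ?_
    exact pow_le_pow_left₀ hy.1.le hy.2.le n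

theorem ppLi_half : 2 * ppLi (1 / 2) = Real.pi ^ 2 / 6 - Real.log 2 ^ 2 := by
  set G : ℝ → ℝ := fun z => ppLi z + ppLi (1 - z) + Real.log z * Real.log (1 - z) with hG
  have hd : ∀ z ∈ Set.Ioo (0 : ℝ) 1, HasDerivAt G 0 z := by
    rintro z ⟨h0, h1⟩
    have d1 := ppLi_deriv h0 h1
    have d3 : HasDerivAt (fun z : ℝ => 1 - z) (-1) z := by
      simpa using (hasDerivAt_id z).const_sub 1
    have d2 := (ppLi_deriv (z := 1 - z) (by linarith) (by linarith)).comp z d3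
    have d4 := Real.hasDerivAt_log h0.ne'
    have d5 := d3.log (by linarith)
    have := (d1.add d2).add (d4.mul d5)
    convert! this using 1
    have : 1 - z ≠ 0 := by linarith
    have := h0.ne'
    field_simp
    ring_nf
  have hconst : ∀ z ∈ Set.Ioo (0 : ℝ) 1, G z = G (1 / 2) := by
    intro z hz
    have hopen : IsOpen (Set.Ioo (0 : ℝ) 1) := isOpen_Ioo
    refine hopen.is_const_of_deriv_eq_zero isPreconnected_Ioo
      (fun x hx => (hd x hx).differentiableAt.differentiableWithinAt)
      (fun x hx => (hd x hx).deriv) hz ⟨by norm_num, by norm_num⟩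
  have hnb : ∀ᶠ z in 𝓝[>] (0 : ℝ), z ∈ Set.Ioo (0 : ℝ) 1 := Ioo_mem_nhdsGT (by norm_num)
  have hlim1 : Tendsto G (𝓝[>] 0) (𝓝 (G (1 / 2))) :=
    tendsto_const_nhds.congr' (hnb.mono fun z hz => (hconst z hz).symm)
  have t1 : Tendsto ppLi (𝓝[>] 0) (𝓝 (ppLi 0)) :=
    (ppLi_cont 0 (by simp)).tendsto.mono_left
      (nhdsWithin_le_iff.mpr (hnb.mono fun z hz => ⟨hz.1.le, hz.2.le⟩))
  have t2 : Tendsto (fun z => ppLi (1 - z)) (𝓝[>] 0) (𝓝 (ppLi 1)) := by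
    have hc := (ppLi_cont 1 (by simp)).tendsto
    refine hc.comp (tendsto_nhdsWithin_iff.mpr ⟨?_, ?_⟩)
    · have : Tendsto (fun z : ℝ => 1 - z) (𝓝 0) (𝓝 (1 - 0)) := tendsto_id.const_sub 1
      rw [sub_zero] at this
      exact this.mono_left nhdsWithin_le_nhds
    · exact hnb.mono fun z hz => ⟨by linarith [hz.2], by linarith [hz.1]⟩
  have t3 : Tendsto (fun z => Real.log z * Real.log (1 - z)) (𝓝[>] 0) (𝓝 0) := by
    have ht := (tendsto_log_mul_rpow_nhdsGT_zero (r := 1) one_pos)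
    simp only [Real.rpow_one] at ht
    have ht2 : Tendsto (fun z => 2 * |Real.log z * z|) (𝓝[>] 0) (𝓝 0) := by
      simpa using ht.abs.const_mul 2
    refine squeeze_zero_norm' ?_ ht2
    have hnb2 : ∀ᶠ z in 𝓝[>] (0 : ℝ), z ∈ Set.Ioo (0 : ℝ) (1 / 2) := Ioo_mem_nhdsGT (by norm_num)
    filter_upwards [hnb2] with z hz
    rw [Real.norm_eq_abs, abs_mul, abs_mul]
    have : |Real.log (1 - z)| ≤ 2 * |z| := by
      have := Real.abs_log_sub_add_sum_range_le (x := z) (by rw [abs_of_pos hz.1]; linarith [hz.2]) 0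
      simp at this
      refine this.trans ?_
      rw [abs_of_pos hz.1, div_le_iff₀ (by linarith [hz.2])]
      nlinarith [hz.1, hz.2]
    nlinarith [abs_nonneg (Real.log z)]
  have hlim2 := tendsto_nhds_unique hlim1 ((t1.add t2).add t3)
  have l0 : ppLi 0 = 0 := by simp [ppLi]
  have l1 : ppLi 1 = Real.pi ^ 2 / 6 := by rw [← ppLi_one]; simp [ppLi]
  rw [l0, l1, hG] at hlim2
  have e : Real.log (1 / 2) = - Real.log 2 := by rw [one_div, Real.log_inv]
  simp only at hlim2
  rw [show (1 : ℝ) - 1 / 2 = 1 / 2 by norm_num, e] at hlim2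
  linarith

theorem pp_step3 {ι : Type*} (ν : ι → ℕ) (B : ℝ → Finset ι)
    (hB : ∀ x i, i ∈ B x ↔ (ν i : ℝ) ≤ x) (κ C η : ℝ) (hη : 0 < η) (hC : 0 ≤ C)
    (hI : ∀ t : ℝ, 1 ≤ t → |((B t).card : ℝ) - κ * t| ≤ C * t ^ (1 - 2 * η))
    (f f' Q : ℝ → ℝ) (K : ℝ) (hK : 0 ≤ K)
    (hf : ∀ t : ℝ, 1 ≤ t → HasDerivAt f (f' t) t)
    (hQ : ∀ t : ℝ, 1 ≤ t → HasDerivAt Q (f t) t)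
    (hf' : ContinuousOn f' (Set.Ici 1))
    (b1 : ∀ t : ℝ, 1 ≤ t → |f t| ≤ K * t ^ (η - 1))
    (b2 : ∀ t : ℝ, 1 ≤ t → |f' t| ≤ K * t ^ (η - 2)) :
    ∃ c C' : ℝ, 0 ≤ C' ∧ ∀ y : ℝ, 1 ≤ y →
      |(∑ i ∈ B y, f (ν i)) - κ * Q y - c| ≤ C' * y ^ (-η) := by
  have hC' : 0 ≤ 2 * K * C + K * C / η := by positivity
  have key := pp_cauchy (fun y => (∑ i ∈ B y, f (ν i)) - κ * Q y)
    (fun y => (2 * K * C + K * C / η) * y ^ (-η)) 1 ?_ ?_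
  · obtain ⟨c, hc⟩ := key
    exact ⟨c, _, hC', hc⟩
  · simpa using (tendsto_rpow_neg_atTop hη).const_mul (2 * K * C + K * C / η)
  · intro a b ha hab
    have pos : ∀ t ∈ Set.Icc a b, 0 < t := fun t ht => by linarith [ht.1]
    have one : ∀ t ∈ Set.Icc a b, 1 ≤ t := fun t ht => by linarith [ht.1]
    have prod1 : ∀ t : ℝ, 1 ≤ t → |f t| * (C * t ^ (1 - 2 * η)) ≤ K * C * t ^ (-η) := by
      intro t ht
      have h0 : 0 < t := by linarith
      calc |f t| * (C * t ^ (1 - 2 * η)) ≤ (K * t ^ (η - 1)) * (C * t ^ (1 - 2 * η)) := by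
            gcongr; exact b1 t ht
        _ = K * C * (t ^ (η - 1) * t ^ (1 - 2 * η)) := by ring
        _ = K * C * t ^ (-η) := by rw [← Real.rpow_add h0]; ring_nf
    have := pp_abel ν B hB (fun _ => 1) f f' (fun t => κ * t) (fun _ => κ) (fun t => κ * Q t)
      (fun t => C * t ^ (1 - 2 * η)) (fun t => - (K * C / η) * t ^ (-η))
      (fun t => K * C * t ^ (-η - 1)) a b (by linarith) hab
      (fun t ht => hf t (one t ht))
      (fun t ht => by simpa using (hasDerivAt_id t).const_mul κ)
      (fun t ht => by
        have := (hQ t (one t ht)).const_mul κ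
        rwa [mul_comm] at this)
      (fun t ht => by
        have := (Real.hasDerivAt_rpow_const (x := t) (p := -η) (Or.inl (pos t ht).ne')).const_mul
          (- (K * C / η))
        convert! this using 1
        field_simp)
      (hf'.mono fun t ht => one t ht) continuousOn_const
      (continuousOn_const.mul (continuousOn_id.rpow_const fun t ht => Or.inl (pos t ht).ne'))
      (fun t ht => by simpa using hI t (one t ht))
      (fun t ht => by
        have h0 := pos t ht
        calc |f' t| * (C * t ^ (1 - 2 * η)) ≤ (K * t ^ (η - 2)) * (C * t ^ (1 - 2 * η)) := by
              gcongr; exact b2 t (one t ht)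
          _ = K * C * (t ^ (η - 2) * t ^ (1 - 2 * η)) := by ring
          _ = K * C * t ^ (-η - 1) := by rw [← Real.rpow_add h0]; ring_nf)
    simp only [one_mul] at this
    have hb : b ^ (-η) ≤ a ^ (-η) :=
      Real.rpow_le_rpow_of_nonpos (by linarith) hab (by linarith)
    have hb0 : 0 ≤ b ^ (-η) := Real.rpow_nonneg (by linarith) _
    have p1 := prod1 a ha
    have p2 := prod1 b (ha.trans hab)
    have p3 : K * C * b ^ (-η) ≤ K * C * a ^ (-η) := by gcongr
    have p4 : 0 ≤ K * C / η * b ^ (-η) := by positivity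
    have e : (∑ i ∈ B b, f (ν i)) - κ * Q b - ((∑ i ∈ B a, f (ν i)) - κ * Q a)
      = (∑ i ∈ B b, f (ν i)) - (∑ i ∈ B a, f (ν i)) - (κ * Q b - κ * Q a) := by ring
    rw [e]
    refine this.trans ?_
    linarith

/-- power sums -/
theorem pp_pow {ι : Type*} (ν : ι → ℕ) (B : ℝ → Finset ι)
    (hB : ∀ x i, i ∈ B x ↔ (ν i : ℝ) ≤ x) (κ C η : ℝ) (hη : 0 < η) (hC : 0 ≤ C)
    (hI : ∀ t : ℝ, 1 ≤ t → |((B t).card : ℝ) - κ * t| ≤ C * t ^ (1 - 2 * η))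
    (r : ℝ) (hr : r ≠ 0) (hrη : r ≤ η) :
    ∃ c C' : ℝ, 0 ≤ C' ∧ ∀ y : ℝ, 1 ≤ y →
      |(∑ i ∈ B y, (ν i : ℝ) ^ (r - 1)) - κ * (y ^ r / r) - c| ≤ C' * y ^ (-η) := by
  refine pp_step3 ν B hB κ C η hη hC hI (fun t => t ^ (r - 1)) (fun t => (r - 1) * t ^ (r - 2))
    (fun t => t ^ r / r) (1 + |r - 1|) (by positivity) ?_ ?_ ?_ ?_ ?_
  · intro t ht
    have := Real.hasDerivAt_rpow_const (x := t) (p := r - 1) (Or.inl (by linarith))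
    convert! this using 2
    ring_nf
  · intro t ht
    have := (Real.hasDerivAt_rpow_const (x := t) (p := r) (Or.inl (by linarith))).div_const r
    convert! this using 1
    field_simp
  · refine continuousOn_const.mul (continuousOn_id.rpow_const fun t ht => Or.inl ?_)
    have : (1 : ℝ) ≤ t := ht
    simp only [id]; linarith
  · intro t ht
    rw [abs_of_nonneg (Real.rpow_nonneg (by linarith) _)]
    have h1 : t ^ (r - 1) ≤ t ^ (η - 1) := Real.rpow_le_rpow_of_exponent_le ht (by linarith)
    have h0 : 0 ≤ t ^ (η - 1) := Real.rpow_nonneg (by linarith) _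
    nlinarith [abs_nonneg (r - 1)]
  · intro t ht
    rw [abs_mul, abs_of_nonneg (Real.rpow_nonneg (by linarith : (0 : ℝ) ≤ t) _)]
    have h1 : t ^ (r - 2) ≤ t ^ (η - 2) := Real.rpow_le_rpow_of_exponent_le ht (by linarith)
    have h0 : 0 ≤ t ^ (η - 2) := Real.rpow_nonneg (by linarith) _
    nlinarith [abs_nonneg (r - 1)]

theorem pp_harm {ι : Type*} (ν : ι → ℕ) (B : ℝ → Finset ι)
    (hB : ∀ x i, i ∈ B x ↔ (ν i : ℝ) ≤ x) (κ C η : ℝ) (hη : 0 < η) (hC : 0 ≤ C)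
    (hI : ∀ t : ℝ, 1 ≤ t → |((B t).card : ℝ) - κ * t| ≤ C * t ^ (1 - 2 * η)) :
    ∃ c C' : ℝ, 0 ≤ C' ∧ ∀ y : ℝ, 1 ≤ y →
      |(∑ i ∈ B y, (ν i : ℝ)⁻¹) - κ * Real.log y - c| ≤ C' * y ^ (-η) := by
  refine pp_step3 ν B hB κ C η hη hC hI (fun t => t⁻¹) (fun t => -(t ^ 2)⁻¹)
    Real.log 1 (by positivity) ?_ ?_ ?_ ?_ ?_
  · intro t ht
    exact hasDerivAt_inv (by linarith)
  · intro t ht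
    exact Real.hasDerivAt_log (by linarith)
  · refine ContinuousOn.neg (ContinuousOn.inv₀ (by fun_prop) fun t ht => ?_)
    have : (1 : ℝ) ≤ t := ht
    positivity
  · intro t ht
    rw [abs_of_nonneg (by positivity), one_mul, ← Real.rpow_neg_one]
    exact Real.rpow_le_rpow_of_exponent_le ht (by linarith)
  · intro t ht
    rw [abs_neg, abs_of_nonneg (by positivity), one_mul, ← Real.rpow_natCast,
      ← Real.rpow_neg (by linarith)]
    exact Real.rpow_le_rpow_of_exponent_le ht (by push_cast; linarith)

theorem pp_logle (η t : ℝ) (hη : 0 < η) (ht : 1 ≤ t) : Real.log t ≤ η⁻¹ * t ^ η := by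
  have := Real.log_le_rpow_div (by linarith : 0 ≤ t) hη
  rwa [div_eq_inv_mul] at this

theorem pp_logharm {ι : Type*} (ν : ι → ℕ) (B : ℝ → Finset ι)
    (hB : ∀ x i, i ∈ B x ↔ (ν i : ℝ) ≤ x) (κ C η : ℝ) (hη : 0 < η) (hC : 0 ≤ C)
    (hI : ∀ t : ℝ, 1 ≤ t → |((B t).card : ℝ) - κ * t| ≤ C * t ^ (1 - 2 * η)) :
    ∃ c C' : ℝ, 0 ≤ C' ∧ ∀ y : ℝ, 1 ≤ y →
      |(∑ i ∈ B y, Real.log (ν i) / (ν i : ℝ)) - κ * (Real.log y ^ 2 / 2) - c|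
        ≤ C' * y ^ (-η) := by
  refine pp_step3 ν B hB κ C η hη hC hI (fun t => Real.log t / t)
    (fun t => (1 - Real.log t) / t ^ 2)
    (fun t => Real.log t ^ 2 / 2) (1 + η⁻¹) (by positivity) ?_ ?_ ?_ ?_ ?_
  · intro t ht
    have h0 : t ≠ 0 := by linarith
    have := (Real.hasDerivAt_log h0).div (hasDerivAt_id t) h0
    convert! this using 1
    simp only [id]
    field_simp
  · intro t ht
    have h0 : t ≠ 0 := by linarith
    have := ((Real.hasDerivAt_log h0).pow 2).div_const 2
    convert! this using 1
    field_simp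
    simp
    ring
  · have h0 : ∀ t ∈ Set.Ici (1 : ℝ), t ≠ 0 := fun t ht => by
      have : (1 : ℝ) ≤ t := ht
      positivity
    refine ContinuousOn.div (continuousOn_const.sub (Real.continuousOn_log.mono ?_))
      (by fun_prop) ?_
    · intro t ht; exact h0 t ht
    · intro t ht; exact pow_ne_zero 2 (h0 t ht)
  · intro t ht
    have hl := pp_logle η t hη ht
    have hl0 := Real.log_nonneg ht
    have h0 : 0 < t := by linarith
    rw [abs_of_nonneg (by positivity), Real.rpow_sub h0, Real.rpow_one, mul_div_assoc']
    gcongr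
    have : 0 ≤ t ^ η := by positivity
    linarith
  · intro t ht
    have hl := pp_logle η t hη ht
    have hl0 := Real.log_nonneg ht
    have h0 : 0 < t := by linarith
    rw [abs_div, abs_of_nonneg (by positivity : 0 ≤ t ^ 2), Real.rpow_sub h0, mul_div_assoc']
    rw [show (t : ℝ) ^ (2 : ℝ) = t ^ (2 : ℕ) by exact_mod_cast Real.rpow_natCast t 2]
    gcongr
    have h2 : 1 ≤ t ^ η := Real.one_le_rpow ht hη.le
    rw [abs_le]
    have : 0 ≤ η⁻¹ * t ^ η := by positivity
    constructor <;> linarith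

theorem pp_G {ι : Type*} (ν : ι → ℕ) (B : ℝ → Finset ι)
    (hB : ∀ x i, i ∈ B x ↔ (ν i : ℝ) ≤ x) (κ C η : ℝ) (hκ : 0 < κ) (hη : 0 < η) (hC : 0 ≤ C)
    (hI : ∀ t : ℝ, 1 ≤ t → |((B t).card : ℝ) - κ * t| ≤ C * t ^ (1 - 2 * η)) :
    ∃ γ c C' : ℝ, 0 ≤ C' ∧ ∀ y : ℝ, 1 ≤ y →
      |∑ i ∈ B y, ((2 * Real.log (ν i) - Real.log y + γ) / (ν i : ℝ) - c / y)|
        ≤ C' * y ^ (-(η / 2)) := by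
  obtain ⟨γ, Ch, hCh, hh⟩ := pp_harm ν B hB κ C η hη hC hI
  obtain ⟨c, CL, hCL, hL⟩ := pp_logharm ν B hB κ C η hη hC hI
  set c2 := (2 * c + γ ^ 2 / κ) / κ with hc2
  refine ⟨γ / κ, c2, 2 * CL + (η / 2)⁻¹ * Ch + |γ / κ| * Ch + |c2| * C, by positivity, ?_⟩
  intro y hy
  have h0 : 0 < y := by linarith
  have e1 : ∑ i ∈ B y, ((2 * Real.log (ν i) - Real.log y + γ / κ) / (ν i : ℝ) - c2 / y)
      = 2 * (∑ i ∈ B y, Real.log (ν i) / (ν i : ℝ)) + (γ / κ - Real.log y) * (∑ i ∈ B y, (ν i : ℝ)⁻¹)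
        - c2 * ((B y).card / y) := by
    rw [Finset.mul_sum, Finset.mul_sum, ← Finset.sum_add_distrib, Finset.sum_sub_distrib]
    congr 1
    · refine Finset.sum_congr rfl fun i _ => by rw [div_eq_mul_inv, div_eq_mul_inv]; ring
    · simp; ring
  set l := Real.log y with hl
  have hl0 : 0 ≤ l := Real.log_nonneg hy
  set S := ∑ i ∈ B y, Real.log (ν i) / (ν i : ℝ) with hS
  set H := ∑ i ∈ B y, (ν i : ℝ)⁻¹ with hH
  set E := y ^ (-(η / 2)) with hE
  have hE0 : 0 ≤ E := by positivity
  have ht : y ^ (-η) ≤ E := Real.rpow_le_rpow_of_exponent_le hy (by linarith)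
  have ht0 : 0 ≤ y ^ (-η) := by positivity
  have hle : l * y ^ (-η) ≤ (η / 2)⁻¹ * E := by
    calc l * y ^ (-η) ≤ ((η / 2)⁻¹ * y ^ (η / 2)) * y ^ (-η) := by
          gcongr; exact pp_logle (η / 2) y (by positivity) hy
      _ = (η / 2)⁻¹ * (y ^ (η / 2) * y ^ (-η)) := by ring
      _ = (η / 2)⁻¹ * E := by rw [← Real.rpow_add h0, hE]; ring_nf
  have a1 : |2 * (S - κ * (l ^ 2 / 2) - c)| ≤ 2 * CL * E := by
    rw [abs_mul, abs_of_pos (by norm_num : (0 : ℝ) < 2), mul_assoc]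
    gcongr
    exact (hL y hy).trans (by gcongr)
  have a2 : |l * (H - κ * l - γ)| ≤ (η / 2)⁻¹ * Ch * E := by
    rw [abs_mul, abs_of_nonneg hl0]
    calc l * |H - κ * l - γ| ≤ l * (Ch * y ^ (-η)) := by gcongr; exact hh y hy
      _ = Ch * (l * y ^ (-η)) := by ring
      _ ≤ Ch * ((η / 2)⁻¹ * E) := by gcongr
      _ = _ := by ring
  have a3 : |(γ / κ) * (H - κ * l - γ)| ≤ |γ / κ| * Ch * E := by
    rw [abs_mul, mul_assoc]
    gcongr
    exact (hh y hy).trans (by gcongr)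
  have a4 : |c2 * ((B y).card / y - κ)| ≤ |c2| * C * E := by
    rw [abs_mul, mul_assoc]
    gcongr
    have : ((B y).card : ℝ) / y - κ = ((B y).card - κ * y) / y := by field_simp
    rw [this, abs_div, abs_of_pos h0, div_le_iff₀ h0]
    refine (hI y hy).trans ?_
    rw [mul_assoc]
    gcongr
    rw [hE]
    nth_rewrite 3 [← Real.rpow_one y]
    rw [← Real.rpow_add h0]
    exact Real.rpow_le_rpow_of_exponent_le hy (by linarith)
  rw [e1]
  have e2 : 2 * S + (γ / κ - l) * H - c2 * ((B y).card / y) =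
      2 * (S - κ * (l ^ 2 / 2) - c) - l * (H - κ * l - γ) + (γ / κ) * (H - κ * l - γ)
        - c2 * ((B y).card / y - κ) := by
    have : c2 * κ = 2 * c + γ ^ 2 / κ := by rw [hc2]; field_simp
    have h2 : γ / κ * κ = γ := by field_simp
    have h3 : γ ^ 2 / κ = γ / κ * γ := by ring
    linear_combination (-this) - h3 + (l) * h2
  rw [e2]
  rw [abs_le] at *
  constructor <;> linarith [a1.1, a1.2, a2.1, a2.2, a3.1, a3.2, a4.1, a4.2]

theorem pp_powbd {ι : Type*} (ν : ι → ℕ) (B : ℝ → Finset ι)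
    (hB : ∀ x i, i ∈ B x ↔ (ν i : ℝ) ≤ x) (κ C η : ℝ) (hκ : 0 < κ) (hη : 0 < η) (hC : 0 ≤ C)
    (hI : ∀ t : ℝ, 1 ≤ t → |((B t).card : ℝ) - κ * t| ≤ C * t ^ (1 - 2 * η)) :
    ∃ C' : ℝ, 0 ≤ C' ∧ ∀ y : ℝ, 1 ≤ y →
      ∑ i ∈ B y, (ν i : ℝ) ^ (η / 2 - 1) ≤ C' * y ^ (η / 2) := by
  obtain ⟨c, C', hC', h⟩ := pp_pow ν B hB κ C η hη hC hI (η / 2) (by positivity) (by linarith)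
  refine ⟨κ / (η / 2) + |c| + C', by positivity, fun y hy => ?_⟩
  have h0 : 0 < y := by linarith
  have h1 := (abs_le.mp (h y hy)).2
  have h2 : 1 ≤ y ^ (η / 2) := Real.one_le_rpow hy (by positivity)
  have h3 : y ^ (-η) ≤ 1 := Real.rpow_le_one_of_one_le_of_nonpos hy (by linarith)
  have h4 : κ * (y ^ (η / 2) / (η / 2)) = κ / (η / 2) * y ^ (η / 2) := by ring
  rw [h4] at h1
  have h5 : |c| ≤ |c| * y ^ (η / 2) := le_mul_of_one_le_right (abs_nonneg _) h2
  have h6 : C' * y ^ (-η) ≤ C' * y ^ (η / 2) := by gcongr; linarith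
  linarith [le_abs_self c]

theorem pp_sqbd {ι : Type*} (ν : ι → ℕ) (B : ℝ → Finset ι) (hν : ∀ i, 1 ≤ ν i)
    (hB : ∀ x i, i ∈ B x ↔ (ν i : ℝ) ≤ x) (κ C η : ℝ) (hκ : 0 < κ) (hη : 0 < η) (hC : 0 ≤ C)
    (hI : ∀ t : ℝ, 1 ≤ t → |((B t).card : ℝ) - κ * t| ≤ C * t ^ (1 - 2 * η)) :
    ∃ C' : ℝ, 0 ≤ C' ∧ ∀ y : ℝ, 1 ≤ y →
      ∑ i ∈ B y, Real.log (ν i) / (ν i : ℝ) ^ 2 ≤ C' := by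
  obtain ⟨c, C', hC', h⟩ := pp_pow ν B hB κ C η hη hC hI (-(1 / 2)) (by norm_num) (by linarith)
  refine ⟨2 * (|c| + C'), by positivity, fun y hy => ?_⟩
  have h0 : 0 < y := by linarith
  have h1 := (abs_le.mp (h y hy)).2
  have h3 : y ^ (-η) ≤ 1 := Real.rpow_le_one_of_one_le_of_nonpos hy (by linarith)
  have h4 : κ * (y ^ (-(1 / 2) : ℝ) / (-(1 / 2))) ≤ 0 := by
    have : 0 ≤ κ * y ^ (-(1 / 2) : ℝ) := by positivity
    linarith
  have h6 : C' * y ^ (-η) ≤ C' := mul_le_of_le_one_right hC' h3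
  have h7 : ∑ i ∈ B y, (ν i : ℝ) ^ (-(1 / 2) - 1 : ℝ) ≤ |c| + C' := by
    linarith [le_abs_self c]
  refine le_trans ?_ (mul_le_mul_of_nonneg_left h7 (by norm_num : (0 : ℝ) ≤ 2))
  rw [Finset.mul_sum]
  refine Finset.sum_le_sum fun i _ => ?_
  have hi : (1 : ℝ) ≤ ν i := by exact_mod_cast hν i
  have hi0 : (0 : ℝ) < ν i := by linarith
  have := pp_logle (1 / 2) (ν i) (by norm_num) hi
  rw [div_le_iff₀ (by positivity), mul_assoc, ← Real.rpow_natCast, ← Real.rpow_add hi0]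
  norm_num at this ⊢
  exact this

theorem ppNm_add {P : Type*} (N : P → ℕ) (m n : P →₀ ℕ) : Nm N (m + n) = Nm N m * Nm N n := by
  unfold Nm
  exact Finsupp.prod_add_index' (fun _ => pow_zero _) (fun _ _ _ => pow_add _ _ _)

theorem ppNm_pos {P : Type*} (N : P → ℕ) (hN : ∀ p, 2 ≤ N p) (m : P →₀ ℕ) : 1 ≤ Nm N m := by
  unfold Nm Finsupp.prod
  exact Nat.one_le_iff_ne_zero.mpr
    (Finset.prod_ne_zero_iff.mpr fun p _ => pow_ne_zero _ (by have := hN p; omega))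

theorem ppNm_single {P : Type*} (N : P → ℕ) (p : P) (j : ℕ) :
    Nm N (Finsupp.single p j) = N p ^ j := by
  unfold Nm
  exact Finsupp.prod_single_index (pow_zero _)

/-- indicator of a finite set -/
def ppOne {P : Type*} (s : Finset P) : P →₀ ℕ := Finsupp.indicator s (fun _ _ => 1)

theorem ppOne_apply {P : Type*} (s : Finset P) (p : P) : ppOne s p = if p ∈ s then 1 else 0 := by
  simp [ppOne, Finsupp.indicator_apply]

theorem ppOne_support {P : Type*} (s : Finset P) : (ppOne s).support = s := by
  ext p; simp [ppOne_apply]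

theorem ppOne_inj {P : Type*} : Function.Injective (ppOne (P := P)) := by
  intro s t h
  rw [← ppOne_support s, h, ppOne_support]

theorem ppNm_one {P : Type*} (N : P → ℕ) (s : Finset P) : Nm N (ppOne s) = ∏ p ∈ s, N p := by
  unfold Nm Finsupp.prod
  rw [ppOne_support]
  refine Finset.prod_congr rfl fun p hp => by simp [ppOne_apply, hp]

theorem ppOne_le {P : Type*} (s : Finset P) (k : P →₀ ℕ) (h : s ⊆ k.support) : ppOne s ≤ k := by
  intro p
  rw [ppOne_apply]
  split_ifs with hp
  · exact Nat.one_le_iff_ne_zero.mpr (Finsupp.mem_support_iff.mp (h hp))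
  · exact Nat.zero_le _

/-- finite set of squarefree elements -/
def ppBS {P : Type*} (BM : ℝ → Finset (P →₀ ℕ)) (x : ℝ) : Finset (Finset P) :=
  (BM x).preimage ppOne ppOne_inj.injOn

theorem pp_mobius {P : Type*} (N : P → ℕ) (hN : ∀ p, 2 ≤ N p) (BM : ℝ → Finset (P →₀ ℕ))
    (hBM : ∀ x m, m ∈ BM x ↔ (Nm N m : ℝ) ≤ x) (F : Finset P → (P →₀ ℕ) → ℝ) (x : ℝ) :
    ∑ k ∈ BM x, ∑ s ∈ k.support.powerset, F s (k - ppOne s) =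
      ∑ s ∈ ppBS BM x, ∑ n ∈ BM (x / Nm N (ppOne s)), F s n := by
  rw [Finset.sum_sigma', Finset.sum_sigma']
  refine Finset.sum_bij' (fun a _ => ⟨a.2, a.1 - ppOne a.2⟩) (fun a _ => ⟨a.2 + ppOne a.1, a.1⟩)
    ?_ ?_ ?_ ?_ ?_
  · rintro ⟨k, s⟩ h
    simp only [Finset.mem_sigma, Finset.mem_powerset, ppBS, Finset.mem_preimage, hBM] at h ⊢
    have hk : k - ppOne s + ppOne s = k := tsub_add_cancel_of_le (ppOne_le s k h.2)
    have h1 : (Nm N (k - ppOne s) : ℝ) * Nm N (ppOne s) ≤ x := by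
      rw [← Nat.cast_mul, ← ppNm_add, hk]; exact h.1
    have p1 : (1 : ℝ) ≤ Nm N (k - ppOne s) := by exact_mod_cast ppNm_pos N hN _
    have p2 : (1 : ℝ) ≤ Nm N (ppOne s) := by exact_mod_cast ppNm_pos N hN _
    constructor
    · nlinarith
    · rw [le_div_iff₀ (by linarith)]; exact h1
  · rintro ⟨s, n⟩ h
    simp only [Finset.mem_sigma, Finset.mem_powerset, ppBS, Finset.mem_preimage, hBM] at h ⊢
    have p2 : (1 : ℝ) ≤ Nm N (ppOne s) := by exact_mod_cast ppNm_pos N hN _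
    constructor
    · rw [ppNm_add, Nat.cast_mul]
      exact (le_div_iff₀ (by linarith)).mp h.2
    · intro p hp
      simp [ppOne_apply, hp]
  · rintro ⟨k, s⟩ h
    simp only [Finset.mem_sigma, Finset.mem_powerset] at h
    have hk : k - ppOne s + ppOne s = k := tsub_add_cancel_of_le (ppOne_le s k h.2)
    simp [hk]
  · rintro ⟨s, n⟩ h
    simp
  · rintro ⟨k, s⟩ h
    rfl

theorem pp_mu {P : Type*} (k : P →₀ ℕ) :
    ∑ s ∈ k.support.powerset, (-1 : ℝ) ^ s.card = if k = 0 then 1 else 0 := by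
  have := Finset.sum_powerset_neg_one_pow_card (x := k.support)
  have h2 : ((∑ m ∈ k.support.powerset, (-1 : ℤ) ^ m.card : ℤ) : ℝ)
    = ((if k.support = ∅ then 1 else 0 : ℤ) : ℝ) := by rw [this]
  push_cast at h2
  rw [h2]
  simp

/-- von Mangoldt -/
def ppLam {P : Type*} (N : P → ℕ) (k : P →₀ ℕ) : ℝ :=
  ∑ s ∈ k.support.powerset, (-1 : ℝ) ^ s.card * Real.log (Nm N (k - ppOne s))

theorem pp_powlog {P : Type*} (c : P → ℝ) (T : Finset P) :
    ∑ s ∈ T.powerset, (-1 : ℝ) ^ s.card * ∑ p ∈ s, c p =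
      if T.card = 1 then - ∑ p ∈ T, c p else 0 := by
  rcases T.eq_empty_or_nonempty with rfl | ⟨a, ha⟩
  · simp
  obtain ⟨T', hT', rfl⟩ : ∃ T', a ∉ T' ∧ insert a T' = T :=
    ⟨T.erase a, Finset.notMem_erase a T, Finset.insert_erase ha⟩
  rw [Finset.sum_powerset_insert hT', ← Finset.sum_add_distrib]
  have : ∀ s ∈ T'.powerset, (-1 : ℝ) ^ s.card * ∑ p ∈ s, c p +
      (-1 : ℝ) ^ (insert a s).card * ∑ p ∈ insert a s, c p = - c a * (-1 : ℝ) ^ s.card := by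
    intro s hs
    have : a ∉ s := fun h => hT' (Finset.mem_powerset.mp hs h)
    rw [Finset.card_insert_of_notMem this, Finset.sum_insert this, pow_succ]
    ring
  rw [Finset.sum_congr rfl this, ← Finset.mul_sum]
  have h1 : ((∑ m ∈ T'.powerset, (-1 : ℤ) ^ m.card : ℤ) : ℝ)
    = ((if T' = ∅ then 1 else 0 : ℤ) : ℝ) := by rw [Finset.sum_powerset_neg_one_pow_card]
  push_cast at h1
  rw [h1, Finset.card_insert_of_notMem hT']
  by_cases h : T' = ∅
  · subst h; simp
  · simp [h]

theorem ppLam_eq {P : Type*} (N : P → ℕ) (hN : ∀ p, 2 ≤ N p) (k : P →₀ ℕ) :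
    ppLam N k = if k.support.card = 1 then ∑ p ∈ k.support, Real.log (N p) else 0 := by
  have hs : ∀ s ∈ k.support.powerset, (-1 : ℝ) ^ s.card * Real.log (Nm N (k - ppOne s)) =
      Real.log (Nm N k) * (-1 : ℝ) ^ s.card - (-1 : ℝ) ^ s.card * ∑ p ∈ s, Real.log (N p) := by
    intro s hs
    have hk : k - ppOne s + ppOne s = k :=
      tsub_add_cancel_of_le (ppOne_le s k (Finset.mem_powerset.mp hs))
    have p1 : (1 : ℝ) ≤ Nm N (k - ppOne s) := by exact_mod_cast ppNm_pos N hN _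
    have p2 : (1 : ℝ) ≤ Nm N (ppOne s) := by exact_mod_cast ppNm_pos N hN _
    have h1 : Real.log (Nm N k) = Real.log (Nm N (k - ppOne s)) + Real.log (Nm N (ppOne s)) := by
      rw [← Real.log_mul (by linarith) (by linarith), ← Nat.cast_mul, ← ppNm_add, hk]
    have h2 : Real.log (Nm N (ppOne s)) = ∑ p ∈ s, Real.log (N p) := by
      rw [ppNm_one, Nat.cast_prod, Real.log_prod]
      intro p _
      have := hN p
      positivity
    rw [h1, ← h2]; ring
  rw [ppLam, Finset.sum_congr rfl hs, Finset.sum_sub_distrib, ← Finset.mul_sum, pp_mu, pp_powlog]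
  have h0 : Real.log (Nm N k) * (if k = 0 then 1 else 0) = 0 := by
    split_ifs with h
    · subst h; simp [Nm]
    · simp
  rw [h0]
  split_ifs <;> simp

theorem pp_M1 {P : Type*} (N : P → ℕ) (hN : ∀ p, 2 ≤ N p) (BM : ℝ → Finset (P →₀ ℕ))
    (hBM : ∀ x m, m ∈ BM x ↔ (Nm N m : ℝ) ≤ x) (κ C η : ℝ) (hκ : 0 < κ) (hη : 0 < η) (hC : 0 ≤ C)
    (hI : ∀ t : ℝ, 1 ≤ t → |((BM t).card : ℝ) - κ * t| ≤ C * t ^ (1 - 2 * η)) :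
    ∃ C' : ℝ, ∀ x : ℝ, 1 ≤ x → |(∑ k ∈ BM x, ppLam N k / Nm N k) - Real.log x| ≤ C' := by
  obtain ⟨γ, c, C1, hC1, hG⟩ := pp_G (Nm N) BM hBM κ C η hκ hη hC hI
  obtain ⟨C2, hC2, hP⟩ := pp_powbd (Nm N) BM hBM κ C η hκ hη hC hI
  refine ⟨C1 * C2 + |γ| + |c|, fun x hx => ?_⟩
  have hx0 : 0 < x := by linarith
  have key := pp_mobius N hN BM hBM (fun s n => (-1 : ℝ) ^ s.card *
    ((Nm N (ppOne s) : ℝ)⁻¹ * ((2 * Real.log (Nm N n) - Real.log (x / Nm N (ppOne s)) + γ) / Nm N n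
      - c / (x / Nm N (ppOne s))))) x
  have lhs : ∀ k ∈ BM x, ∑ s ∈ k.support.powerset, (-1 : ℝ) ^ s.card *
    ((Nm N (ppOne s) : ℝ)⁻¹ * ((2 * Real.log (Nm N (k - ppOne s)) - Real.log (x / Nm N (ppOne s)) + γ)
      / Nm N (k - ppOne s) - c / (x / Nm N (ppOne s)))) =
      ppLam N k / Nm N k + if k = 0 then (- Real.log x + γ - c / x) else 0 := by
    intro k _
    have hs : ∀ s ∈ k.support.powerset, (-1 : ℝ) ^ s.card *
        ((Nm N (ppOne s) : ℝ)⁻¹ * ((2 * Real.log (Nm N (k - ppOne s)) -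
          Real.log (x / Nm N (ppOne s)) + γ)
          / Nm N (k - ppOne s) - c / (x / Nm N (ppOne s)))) =
        ((-1 : ℝ) ^ s.card * Real.log (Nm N (k - ppOne s))) / Nm N k +
        (-1 : ℝ) ^ s.card * ((Real.log (Nm N k) - Real.log x + γ) / Nm N k - c / x) := by
      intro s hs
      have hk : k - ppOne s + ppOne s = k :=
        tsub_add_cancel_of_le (ppOne_le s k (Finset.mem_powerset.mp hs))
      have p1 : (1 : ℝ) ≤ Nm N (k - ppOne s) := by exact_mod_cast ppNm_pos N hN _
      have p2 : (1 : ℝ) ≤ Nm N (ppOne s) := by exact_mod_cast ppNm_pos N hN _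
      have h0 : (Nm N k : ℝ) = Nm N (k - ppOne s) * Nm N (ppOne s) := by
        rw [← Nat.cast_mul, ← ppNm_add, hk]
      rw [h0, Real.log_mul (by linarith) (by linarith), Real.log_div (by linarith) (by linarith)]
      have q1 : (Nm N (k - ppOne s) : ℝ) ≠ 0 := by linarith
      have q2 : (Nm N (ppOne s) : ℝ) ≠ 0 := by linarith
      field_simp
      ring
    rw [Finset.sum_congr rfl hs, Finset.sum_add_distrib, ← Finset.sum_div, ← Finset.sum_mul, pp_mu,
      ppLam]
    congr 1
    split_ifs with h
    · subst h; simp [Nm]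
    · simp
  rw [Finset.sum_congr rfl lhs, Finset.sum_add_distrib] at key
  have h00 : (0 : P →₀ ℕ) ∈ BM x := by rw [hBM]; simpa [Nm] using hx
  rw [Finset.sum_ite_eq' (BM x) 0, if_pos h00] at key
  have bound : |∑ s ∈ ppBS BM x, ∑ n ∈ BM (x / Nm N (ppOne s)), (-1 : ℝ) ^ s.card *
    ((Nm N (ppOne s) : ℝ)⁻¹ * ((2 * Real.log (Nm N n) - Real.log (x / Nm N (ppOne s)) + γ) / Nm N n
      - c / (x / Nm N (ppOne s))))| ≤ C1 * C2 := by
    refine (Finset.abs_sum_le_sum_abs _ _).trans ?_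
    have h1 : ∀ s ∈ ppBS BM x, |∑ n ∈ BM (x / Nm N (ppOne s)), (-1 : ℝ) ^ s.card *
      ((Nm N (ppOne s) : ℝ)⁻¹ * ((2 * Real.log (Nm N n) - Real.log (x / Nm N (ppOne s)) + γ)
        / Nm N n - c / (x / Nm N (ppOne s))))|
        ≤ C1 * x ^ (-(η / 2)) * (Nm N (ppOne s) : ℝ) ^ (η / 2 - 1) := by
      intro s hs
      simp only [ppBS, Finset.mem_preimage, hBM] at hs
      have p2 : (1 : ℝ) ≤ Nm N (ppOne s) := by exact_mod_cast ppNm_pos N hN _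
      have p3 : (0 : ℝ) < Nm N (ppOne s) := by linarith
      rw [← Finset.mul_sum, ← Finset.mul_sum, abs_mul, abs_pow, abs_neg, abs_one, one_pow, one_mul,
        abs_mul, abs_of_pos (inv_pos.mpr p3)]
      have := hG (x / Nm N (ppOne s)) (by rw [le_div_iff₀ p3]; linarith)
      calc _ ≤ (Nm N (ppOne s) : ℝ)⁻¹ * (C1 * (x / Nm N (ppOne s)) ^ (-(η / 2))) := by gcongr
        _ = _ := by
          rw [Real.div_rpow hx0.le p3.le, Real.rpow_sub p3, Real.rpow_one, Real.rpow_neg p3.le]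
          field_simp
    refine (Finset.sum_le_sum h1).trans ?_
    rw [← Finset.mul_sum]
    have h2 : ∑ s ∈ ppBS BM x, (Nm N (ppOne s) : ℝ) ^ (η / 2 - 1) ≤
        ∑ m ∈ BM x, (Nm N m : ℝ) ^ (η / 2 - 1) := by
      rw [← Finset.sum_image (f := fun m => (Nm N m : ℝ) ^ (η / 2 - 1)) (g := ppOne)
        (fun s _ t _ h => ppOne_inj h)]
      refine Finset.sum_le_sum_of_subset_of_nonneg ?_ (fun _ _ _ => by positivity)
      intro m hm
      obtain ⟨s, hs, rfl⟩ := Finset.mem_image.mp hm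
      simpa [ppBS] using hs
    calc _ ≤ C1 * x ^ (-(η / 2)) * (C2 * x ^ (η / 2)) := by
          gcongr
          exact h2.trans (hP x hx)
      _ = C1 * C2 * (x ^ (-(η / 2)) * x ^ (η / 2)) := by ring
      _ = C1 * C2 := by rw [← Real.rpow_add hx0]; simp
  rw [← key] at bound
  have hcx : |c / x| ≤ |c| := by
    rw [abs_div, abs_of_pos hx0]
    exact div_le_self (abs_nonneg _) hx
  rw [abs_le] at bound hcx ⊢
  constructor <;> linarith [bound.1, bound.2, hcx.1, hcx.2, le_abs_self γ, neg_abs_le γ]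

theorem pp_geom (u : ℝ) (hu : 2 ≤ u) (J : ℕ) :
    ∑ j ∈ Finset.range J, 1 / u ^ (j + 2) ≤ 2 / u ^ 2 := by
  have h1 : ∀ j ∈ Finset.range J, 1 / u ^ (j + 2) ≤ (1 / u ^ 2) * (1 / 2 : ℝ) ^ j := by
    intro j _
    rw [pow_add, one_div_pow, ← one_div_mul_one_div, mul_comm]
    gcongr
  refine (Finset.sum_le_sum h1).trans ?_
  rw [← Finset.mul_sum]
  have := sum_geometric_two_le J
  calc _ ≤ (1 / u ^ 2) * 2 := by gcongr
    _ = _ := by ring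

theorem pp_R {P : Type*} (N : P → ℕ) (hN : ∀ p, 2 ≤ N p) (BM : ℝ → Finset (P →₀ ℕ))
    (hBM : ∀ x m, m ∈ BM x ↔ (Nm N m : ℝ) ≤ x) (BP : ℝ → Finset P)
    (hBP : ∀ x p, p ∈ BP x ↔ (N p : ℝ) ≤ x)
    (κ C η : ℝ) (hκ : 0 < κ) (hη : 0 < η) (hC : 0 ≤ C)
    (hI : ∀ t : ℝ, 1 ≤ t → |((BM t).card : ℝ) - κ * t| ≤ C * t ^ (1 - 2 * η)) :
    ∃ C' : ℝ, 0 ≤ C' ∧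
      ∀ x : ℝ, 1 ≤ x → |(∑ p ∈ BP x, Real.log (N p) / N p) - Real.log x| ≤ C' := by
  obtain ⟨C1, h1⟩ := pp_M1 N hN BM hBM κ C η hκ hη hC hI
  obtain ⟨C2, hC2, h2⟩ := pp_sqbd (Nm N) BM (ppNm_pos N hN) hBM κ C η hκ hη hC hI
  have hC1 : 0 ≤ C1 := (abs_nonneg _).trans (h1 1 le_rfl)
  refine ⟨C1 + 2 * C2, by positivity, fun x hx => ?_⟩
  have hx0 : 0 < x := by linarith
  have hlog : ∀ p, 0 ≤ Real.log (N p) := fun p =>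
    Real.log_nonneg (by have := hN p; exact_mod_cast (by omega : 1 ≤ N p))
  have hN2 : ∀ p, (2 : ℝ) ≤ N p := fun p => by exact_mod_cast hN p
  have lam0 : ∀ k, 0 ≤ ppLam N k := by
    intro k
    rw [ppLam_eq N hN]
    split_ifs
    · exact Finset.sum_nonneg fun p _ => hlog p
    · exact le_rfl
  have lamS : ∀ p j, j ≠ 0 → ppLam N (Finsupp.single p j) = Real.log (N p) := by
    intro p j hj
    rw [ppLam_eq N hN, Finsupp.support_single_ne_zero p hj]
    simp
  have sinj : ∀ p q : P, ∀ i j : ℕ, i ≠ 0 → Finsupp.single p i = Finsupp.single q j →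
      p = q ∧ i = j := by
    intro p q i j hi h
    rcases (Finsupp.single_eq_single_iff p q i j).mp h with h | h
    · exact h
    · exact absurd h.1 hi
  set I1 := (BP x).image (fun p => Finsupp.single p 1) with hI1
  have sub1 : I1 ⊆ BM x := by
    intro k hk
    obtain ⟨p, hp, rfl⟩ := Finset.mem_image.mp hk
    rw [hBM, ppNm_single, pow_one]
    exact (hBP x p).mp hp
  have s1 : ∑ k ∈ I1, ppLam N k / Nm N k = ∑ p ∈ BP x, Real.log (N p) / N p := by
    rw [hI1, Finset.sum_image (fun p _ q _ h => (sinj p q 1 1 one_ne_zero h).1)]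
    refine Finset.sum_congr rfl fun p _ => ?_
    rw [lamS p 1 one_ne_zero, ppNm_single, pow_one]
  have s2 := Finset.sum_sdiff (f := fun k => ppLam N k / (Nm N k : ℝ)) sub1
  rw [s1] at s2
  have s3 : 0 ≤ ∑ k ∈ BM x \ I1, ppLam N k / (Nm N k : ℝ) :=
    Finset.sum_nonneg fun k _ => div_nonneg (lam0 k) (Nat.cast_nonneg _)
  have s4 : ∑ k ∈ BM x \ I1, ppLam N k / (Nm N k : ℝ) ≤ 2 * C2 := by
    set I2 := (BP x ×ˢ Finset.range ⌊x⌋₊).image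
      (fun a : P × ℕ => Finsupp.single a.1 (a.2 + 2)) with hI2
    have e1 : ∑ k ∈ (BM x \ I1).filter (fun k => k.support.card = 1), ppLam N k / (Nm N k : ℝ)
        = ∑ k ∈ BM x \ I1, ppLam N k / (Nm N k : ℝ) := by
      refine Finset.sum_filter_of_ne fun k _ hk => ?_
      by_contra h
      exact hk (by rw [ppLam_eq N hN, if_neg h, zero_div])
    rw [← e1]
    have sub2 : (BM x \ I1).filter (fun k => k.support.card = 1) ⊆ I2 := by
      intro k hk
      rw [Finset.mem_filter, Finset.mem_sdiff] at hk
      obtain ⟨⟨hk1, hk2⟩, hk3⟩ := hk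
      obtain ⟨p, j, hj, rfl⟩ := Finsupp.card_support_eq_one'.mp hk3
      rw [hBM, ppNm_single] at hk1
      push_cast at hk1
      have hp : (N p : ℝ) ≤ x :=
        (le_self_pow₀ (by linarith [hN2 p]) hj).trans hk1
      have hj1 : j ≠ 1 := by
        rintro rfl
        exact hk2 (Finset.mem_image.mpr ⟨p, (hBP x p).mpr hp, rfl⟩)
      refine Finset.mem_image.mpr ⟨(p, j - 2), ?_, ?_⟩
      · rw [Finset.mem_product, Finset.mem_range]
        refine ⟨(hBP x p).mpr hp, ?_⟩
        have h3 : j ≤ ⌊x⌋₊ := by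
          refine Nat.le_floor (le_trans ?_ hk1)
          have h4 : j < N p ^ j := Nat.lt_pow_self (by have := hN p; omega)
          exact_mod_cast h4.le
        simp only
        omega
      · simp only
        rw [Nat.sub_add_cancel (by omega)]
    refine (Finset.sum_le_sum_of_subset_of_nonneg sub2
      fun k _ _ => div_nonneg (lam0 k) (Nat.cast_nonneg _)).trans ?_
    rw [hI2, Finset.sum_image, Finset.sum_product]
    · have e2 : ∀ p ∈ BP x, ∑ j ∈ Finset.range ⌊x⌋₊, ppLam N (Finsupp.single p (j + 2)) /
          (Nm N (Finsupp.single p (j + 2)) : ℝ) ≤ 2 * (Real.log (N p) / (N p : ℝ) ^ 2) := by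
        intro p _
        have : ∀ j ∈ Finset.range ⌊x⌋₊, ppLam N (Finsupp.single p (j + 2)) /
          (Nm N (Finsupp.single p (j + 2)) : ℝ) = Real.log (N p) * (1 / (N p : ℝ) ^ (j + 2)) := by
          intro j _
          rw [lamS _ _ (by omega), ppNm_single, Nat.cast_pow]; ring
        rw [Finset.sum_congr rfl this, ← Finset.mul_sum]
        calc _ ≤ Real.log (N p) * (2 / (N p : ℝ) ^ 2) := by
              gcongr
              exact pp_geom _ (hN2 p) _
          _ = _ := by ring
      refine (Finset.sum_le_sum e2).trans ?_
      rw [← Finset.mul_sum]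
      gcongr
      refine le_trans ?_ (h2 x hx)
      refine le_trans (le_of_eq ?_) (Finset.sum_le_sum_of_subset_of_nonneg sub1 ?_)
      · rw [hI1, Finset.sum_image (fun p _ q _ h => (sinj p q 1 1 one_ne_zero h).1)]
        refine Finset.sum_congr rfl fun p _ => ?_
        rw [ppNm_single, pow_one]
      · intro k _ _
        refine div_nonneg (Real.log_nonneg ?_) (by positivity)
        exact_mod_cast ppNm_pos N hN k
    · rintro ⟨p, i⟩ _ ⟨q, j⟩ _ h
      have := sinj p q (i + 2) (j + 2) (by omega) h
      simp only [Prod.mk.injEq]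
      exact ⟨this.1, by omega⟩
  have h3 := h1 x hx
  rw [abs_le] at h3 ⊢
  constructor <;> linarith [h3.1, h3.2]

/-- Mertens 2 -/
theorem pp_S {P : Type*} (N : P → ℕ) (hN : ∀ p, 2 ≤ N p) (BP : ℝ → Finset P)
    (hBP : ∀ x p, p ∈ BP x ↔ (N p : ℝ) ≤ x) (C : ℝ) (hC : 0 ≤ C)
    (hR : ∀ x : ℝ, 1 ≤ x → |(∑ p ∈ BP x, Real.log (N p) / N p) - Real.log x| ≤ C)
    (A : ℝ)
    (hA : Tendsto (fun x : ℝ => (∑ p ∈ BP x, 1 / (N p : ℝ)) - Real.log (Real.log x)) atTop (𝓝 A)) :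
    ∀ x : ℝ, 3 / 2 ≤ x →
      |(∑ p ∈ BP x, 1 / (N p : ℝ)) - (Real.log (Real.log x) + A)| ≤ 3 * C / Real.log x := by
  intro a ha
  have key : ∀ b, a ≤ b → |((∑ p ∈ BP b, 1 / (N p : ℝ)) - Real.log (Real.log b)) -
      ((∑ p ∈ BP a, 1 / (N p : ℝ)) - Real.log (Real.log a))| ≤ 3 * C / Real.log a := by
    intro b hab
    have one : ∀ t ∈ Set.Icc a b, 1 < t := fun t ht => by linarith [ht.1]
    have ne : ∀ t ∈ Set.Icc a b, t ≠ 0 := fun t ht => by linarith [ht.1]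
    have lp : ∀ t ∈ Set.Icc a b, 0 < Real.log t := fun t ht => Real.log_pos (one t ht)
    have lc : ContinuousOn Real.log (Set.Icc a b) := Real.continuousOn_log.mono fun t ht => ne t ht
    have dl : ∀ t ∈ Set.Icc a b, HasDerivAt (fun t => (Real.log t)⁻¹)
        (-(t * Real.log t ^ 2)⁻¹) t := by
      intro t ht
      have := (Real.hasDerivAt_log (ne t ht)).inv (lp t ht).ne'
      convert! this using 1
      rw [mul_inv, neg_div, div_eq_mul_inv]
    have cont : ContinuousOn (fun t : ℝ => (t * Real.log t ^ 2)⁻¹) (Set.Icc a b) :=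
      (continuousOn_id.mul (lc.pow 2)).inv₀ fun t ht =>
        mul_ne_zero (ne t ht) (pow_ne_zero 2 (lp t ht).ne')
    have := pp_abel N BP hBP (fun p => Real.log (N p) / N p) (fun t => (Real.log t)⁻¹)
      (fun t => -(t * Real.log t ^ 2)⁻¹) Real.log (fun t => t⁻¹) (fun t => Real.log (Real.log t))
      (fun _ => C) (fun t => -C * (Real.log t)⁻¹) (fun t => C * (t * Real.log t ^ 2)⁻¹)
      a b (by linarith) hab dl
      (fun t ht => Real.hasDerivAt_log (ne t ht))
      (fun t ht => by
        have := (Real.hasDerivAt_log (ne t ht)).log (lp t ht).ne'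
        convert! this using 1
        rw [div_eq_mul_inv, mul_comm])
      (fun t ht => by
        have := (dl t ht).const_mul (-C)
        convert! this using 1
        ring)
      cont.neg
      (continuousOn_id.inv₀ ne)
      (continuousOn_const.mul cont)
      (fun t ht => hR t (one t ht).le)
      (fun t ht => by
        have := (one t ht)
        rw [abs_neg, abs_of_nonneg (by positivity), mul_comm])
    have conv : ∀ x, ∑ p ∈ BP x, Real.log (N p) / N p * (Real.log (N p))⁻¹ =
        ∑ p ∈ BP x, 1 / (N p : ℝ) := by
      intro x
      refine Finset.sum_congr rfl fun p _ => ?_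
      have h2 : (2 : ℝ) ≤ N p := by exact_mod_cast hN p
      have : Real.log (N p) ≠ 0 := (Real.log_pos (by linarith)).ne'
      field_simp
    rw [conv, conv] at this
    have la := lp a ⟨le_rfl, hab⟩
    have lb := lp b ⟨hab, le_rfl⟩
    have hle : (Real.log b)⁻¹ ≤ (Real.log a)⁻¹ :=
      inv_anti₀ la (Real.log_le_log (by linarith) hab)
    rw [abs_of_pos (inv_pos.mpr la), abs_of_pos (inv_pos.mpr lb)] at this
    have e : ((∑ p ∈ BP b, 1 / (N p : ℝ)) - Real.log (Real.log b)) -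
      ((∑ p ∈ BP a, 1 / (N p : ℝ)) - Real.log (Real.log a)) =
      (∑ p ∈ BP b, 1 / (N p : ℝ)) - (∑ p ∈ BP a, 1 / (N p : ℝ)) -
        (Real.log (Real.log b) - Real.log (Real.log a)) := by ring
    rw [e, div_eq_mul_inv]
    refine this.trans ?_
    have h5 : (Real.log b)⁻¹ * C ≤ (Real.log a)⁻¹ * C := by gcongr
    have h6 : 0 ≤ C * (Real.log b)⁻¹ := by positivity
    linarith
  have hlim := (hA.sub_const ((∑ p ∈ BP a, 1 / (N p : ℝ)) - Real.log (Real.log a))).abs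
  have := le_of_tendsto hlim ((eventually_ge_atTop a).mono key)
  rw [abs_sub_comm] at this
  convert! this using 2
  ring

theorem pp_logone (u : ℝ) (h0 : 0 ≤ u) (h1 : u ≤ 1 / 2) : |Real.log (1 - u)| ≤ 2 * u := by
  have := Real.abs_log_sub_add_sum_range_le (x := u) (by rw [abs_of_nonneg h0]; linarith) 0
  simp at this
  refine this.trans ?_
  rw [abs_of_nonneg h0, div_le_iff₀ (by linarith)]
  nlinarith

theorem pp_inner {P : Type*} (N : P → ℕ) (hN : ∀ p, 2 ≤ N p) (BP : ℝ → Finset P)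
    (hBP : ∀ x p, p ∈ BP x ↔ (N p : ℝ) ≤ x) (C A : ℝ) (hC : 0 ≤ C)
    (hS : ∀ x : ℝ, 3 / 2 ≤ x →
      |(∑ p ∈ BP x, 1 / (N p : ℝ)) - (Real.log (Real.log x) + A)| ≤ C / Real.log x) :
    ∃ C' : ℝ, 0 ≤ C' ∧ ∀ x : ℝ, 3 ≤ x → 1 ≤ Real.log (Real.log x) →
      |(∑ p ∈ BP (Real.sqrt x), 1 / (N p : ℝ) * Real.log (1 - Real.log (N p) / Real.log x))
        + ppLi (1 / 2)| ≤ C' * (Real.log (Real.log x) / Real.log x) := by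
  set l0 := Real.log (3 / 2) with hl0
  have l0p : 0 < l0 := Real.log_pos (by norm_num)
  refine ⟨2 * C * Real.log 2 + 2 * C + 2 * C * (1 + |Real.log l0|) + l0 * (Real.pi ^ 2 / 6),
    by positivity, ?_⟩
  intro x hx3 hll
  set V := Real.log x with hV
  have hx0 : 0 < x := by linarith
  have hV1 : 1 < V := by
    by_contra h
    push Not at h
    have hV0 : 0 ≤ V := Real.log_nonneg (by linarith)
    have := Real.log_nonpos hV0 h
    linarith
  have hVp : 0 < V := by linarith
  set b := Real.sqrt x with hb
  have hb2 : b ^ 2 = x := Real.sq_sqrt hx0.le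
  have hb0 : 0 < b := Real.sqrt_pos.mpr hx0
  have hab : 3 / 2 ≤ b := by
    by_contra h
    push Not at h
    nlinarith
  have hlb : Real.log b = V / 2 := by rw [hb, Real.log_sqrt hx0.le]
  have hl0V : l0 ≤ V / 2 := by rw [← hlb]; exact Real.log_le_log (by norm_num) hab
  have one : ∀ t ∈ Set.Icc (3 / 2) b, 1 < t := fun t ht => by linarith [ht.1]
  have ne : ∀ t ∈ Set.Icc (3 / 2) b, t ≠ 0 := fun t ht => by linarith [ht.1]
  have lp : ∀ t ∈ Set.Icc (3 / 2) b, 0 < Real.log t := fun t ht => Real.log_pos (one t ht)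
  have lle : ∀ t ∈ Set.Icc (3 / 2) b, Real.log t ≤ V / 2 := fun t ht => by
    rw [← hlb]; exact Real.log_le_log (by linarith [one t ht]) ht.2
  have lc : ContinuousOn Real.log (Set.Icc (3 / 2) b) :=
    Real.continuousOn_log.mono fun t ht => ne t ht
  have u0 : ∀ t ∈ Set.Icc (3 / 2) b, 0 < Real.log t / V := fun t ht => div_pos (lp t ht) hVp
  have u1 : ∀ t ∈ Set.Icc (3 / 2) b, Real.log t / V ≤ 1 / 2 := fun t ht => by
    rw [div_le_iff₀ hVp]; linarith [lle t ht]
  have dd : ∀ t ∈ Set.Icc (3 / 2) b, HasDerivAt (fun t => Real.log t / V) (t⁻¹ / V) t :=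
    fun t ht => (Real.hasDerivAt_log (ne t ht)).div_const V
  have dll : ∀ t ∈ Set.Icc (3 / 2) b, HasDerivAt (fun t => Real.log (Real.log t))
      ((t * Real.log t)⁻¹) t := fun t ht => by
    have := (Real.hasDerivAt_log (ne t ht)).log (lp t ht).ne'
    convert! this using 1
    rw [mul_inv, div_eq_mul_inv]
  have cll : ContinuousOn (fun t : ℝ => (t * Real.log t)⁻¹) (Set.Icc (3 / 2) b) :=
    (continuousOn_id.mul lc).inv₀ fun t ht => mul_ne_zero (ne t ht) (lp t ht).ne'
  have key := pp_abel N BP hBP (fun p => 1 / (N p : ℝ)) (fun t => Real.log (1 - Real.log t / V))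
    (fun t => -(t * (V - Real.log t))⁻¹) (fun t => Real.log (Real.log t) + A)
    (fun t => (t * Real.log t)⁻¹) (fun t => - ppLi (Real.log t / V))
    (fun t => C / Real.log t) (fun t => 2 * C / V * Real.log (Real.log t))
    (fun t => 2 * C / V * (t * Real.log t)⁻¹) (3 / 2) b (by norm_num) hab
    (fun t ht => by
      have := ((dd t ht).const_sub 1).log (by linarith [u1 t ht])
      convert! this using 1
      have h1 := ne t ht
      have h2 : V - Real.log t ≠ 0 := by linarith [lle t ht]
      have h3 : 1 - Real.log t / V ≠ 0 := by linarith [u1 t ht]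
      field_simp)
    (fun t ht => (dll t ht).add_const A)
    (fun t ht => by
      have := ((ppLi_deriv (u0 t ht) (by linarith [u1 t ht])).comp t (dd t ht)).neg
      convert! this using 1
      have h1 := ne t ht
      have h2 := (lp t ht).ne'
      field_simp)
    (fun t ht => (dll t ht).const_mul _)
    (((continuousOn_id.mul (continuousOn_const.sub lc)).inv₀ fun t ht =>
      mul_ne_zero (ne t ht) (by
        have h9 := lle t ht
        show V - Real.log t ≠ 0
        linarith)).neg)
    cll (continuousOn_const.mul cll)
    (fun t ht => hS t ht.1)
    (fun t ht => by
      have h1 : 0 < t := by linarith [one t ht]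
      have h2 := lp t ht
      have h3 : V / 2 ≤ V - Real.log t := by linarith [lle t ht]
      have h4 : 0 < V - Real.log t := by linarith
      rw [abs_neg, abs_of_pos (by positivity), mul_inv, mul_inv]
      have h5 : (V - Real.log t)⁻¹ ≤ 2 / V := by
        rw [show (2 : ℝ) / V = (V / 2)⁻¹ by rw [inv_div]]
        exact inv_anti₀ (by positivity) h3
      calc t⁻¹ * (V - Real.log t)⁻¹ * (C / Real.log t)
          ≤ t⁻¹ * (2 / V) * (C / Real.log t) := by gcongr
        _ = _ := by ring)
  have hempty : BP (3 / 2) = ∅ := by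
    refine Finset.eq_empty_of_forall_notMem fun p hp => ?_
    rw [hBP] at hp
    have : (2 : ℝ) ≤ N p := by exact_mod_cast hN p
    linarith
  rw [hempty, Finset.sum_empty, sub_zero] at key
  simp only [hlb] at key
  rw [← hl0] at key
  have e1 : V / 2 / V = 1 / 2 := by field_simp
  rw [e1] at key
  have g1 : |Real.log (1 - 1 / 2)| = Real.log 2 := by
    rw [show (1 : ℝ) - 1 / 2 = 2⁻¹ by norm_num, Real.log_inv, abs_neg,
      abs_of_pos (Real.log_pos (by norm_num))]
  rw [g1] at key
  have ua0 : 0 ≤ l0 / V := by positivity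
  have ua1 : l0 / V ≤ 1 / 2 := by rw [div_le_iff₀ hVp]; linarith
  have b1 : Real.log 2 * (C / (V / 2)) = (2 * C * Real.log 2) / V := by field_simp
  have b2 : |Real.log (1 - l0 / V)| * (C / l0) ≤ 2 * C / V := by
    calc _ ≤ 2 * (l0 / V) * (C / l0) := by gcongr; exact pp_logone _ ua0 ua1
      _ = _ := by field_simp
  have b3 : 2 * C / V * Real.log (V / 2) - 2 * C / V * Real.log l0 ≤
      2 * C / V * (Real.log V + |Real.log l0|) := by
    rw [← mul_sub]
    gcongr
    have : Real.log (V / 2) ≤ Real.log V := Real.log_le_log (by positivity) (by linarith)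
    linarith [neg_abs_le (Real.log l0)]
  have b4 := ppLi_bound ua0 (by linarith)
  have L1 := hll
  set L := Real.log V with hL
  have fin : 2 * C * Real.log 2 / V + 2 * C / V + 2 * C / V * (L + |Real.log l0|)
      + l0 / V * (Real.pi ^ 2 / 6) ≤
      (2 * C * Real.log 2 + 2 * C + 2 * C * (1 + |Real.log l0|) + l0 * (Real.pi ^ 2 / 6)) * (L / V) := by
    have : (2 * C * Real.log 2 + 2 * C + 2 * C * (1 + |Real.log l0|) + l0 * (Real.pi ^ 2 / 6)) * (L / V)
      - (2 * C * Real.log 2 / V + 2 * C / V + 2 * C / V * (L + |Real.log l0|)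
      + l0 / V * (Real.pi ^ 2 / 6)) =
      (2 * C * Real.log 2 + 2 * C + 2 * C * |Real.log l0| + l0 * (Real.pi ^ 2 / 6)) * (L - 1) / V := by
      ring
    have h2 : 0 ≤ (2 * C * Real.log 2 + 2 * C + 2 * C * |Real.log l0| + l0 * (Real.pi ^ 2 / 6))
        * (L - 1) / V := by
      have : 0 ≤ L - 1 := by linarith
      positivity
    linarith
  refine le_trans ?_ fin
  rw [abs_le] at key b4 ⊢
  constructor <;> linarith [key.1, key.2, b4.1, b4.2]

theorem pp_hyper {P : Type*} (N : P → ℕ) (hN : ∀ p, 2 ≤ N p) (BP : ℝ → Finset P)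
    (hBP : ∀ x p, p ∈ BP x ↔ (N p : ℝ) ≤ x) (x : ℝ) (hx : 0 < x) :
    ∑ᶠ pq ∈ {pq : P × P | (N pq.1 : ℝ) * (N pq.2 : ℝ) ≤ x}, 1 / ((N pq.1 : ℝ) * (N pq.2 : ℝ)) =
      2 * (∑ p ∈ BP (Real.sqrt x), 1 / (N p : ℝ) * ∑ q ∈ BP (x / N p), 1 / (N q : ℝ)) -
        (∑ p ∈ BP (Real.sqrt x), 1 / (N p : ℝ)) ^ 2 := by
  set y := Real.sqrt x with hy
  have hy2 : y * y = x := Real.mul_self_sqrt hx.le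
  have hy0 : 0 < y := Real.sqrt_pos.mpr hx
  have hN2 : ∀ p, (2 : ℝ) ≤ N p := fun p => by exact_mod_cast hN p
  set f : P × P → ℝ := fun pq => 1 / ((N pq.1 : ℝ) * (N pq.2 : ℝ)) with hf
  set D : Finset (P × P) := (BP x ×ˢ BP x).filter (fun pq => (N pq.1 : ℝ) * (N pq.2 : ℝ) ≤ x) with hD
  have hDm : ∀ pq, pq ∈ D ↔ (N pq.1 : ℝ) * (N pq.2 : ℝ) ≤ x := by
    intro pq
    rw [hD, Finset.mem_filter, Finset.mem_product, hBP, hBP]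
    have h1 := hN2 pq.1
    have h2 := hN2 pq.2
    constructor
    · exact fun h => h.2
    · intro h; refine ⟨⟨?_, ?_⟩, h⟩ <;> nlinarith
  have hset : {pq : P × P | (N pq.1 : ℝ) * (N pq.2 : ℝ) ≤ x} = (D : Set (P × P)) := by
    ext pq; simp [hDm]
  rw [hset, finsum_mem_coe_finset]
  set D1 := D.filter (fun pq => (N pq.1 : ℝ) ≤ y) with hD1
  set D2 := D.filter (fun pq => (N pq.2 : ℝ) ≤ y) with hD2
  have hU : D1 ∪ D2 = D := by
    rw [hD1, hD2, ← Finset.filter_or, Finset.filter_eq_self]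
    intro pq h
    rw [hDm] at h
    by_contra hc
    push Not at hc
    nlinarith [hc.1, hc.2]
  have hInt : D1 ∩ D2 = BP y ×ˢ BP y := by
    ext pq
    have m1 : pq ∈ D1 ↔ pq ∈ D ∧ (N pq.1 : ℝ) ≤ y := by rw [hD1]; exact Finset.mem_filter
    have m2 : pq ∈ D2 ↔ pq ∈ D ∧ (N pq.2 : ℝ) ≤ y := by rw [hD2]; exact Finset.mem_filter
    rw [Finset.mem_inter, m1, m2, hDm, Finset.mem_product, hBP, hBP]
    constructor
    · exact fun h => ⟨h.1.2, h.2.2⟩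
    · intro h
      have h1 := hN2 pq.1
      have h2 := hN2 pq.2
      have : (N pq.1 : ℝ) * (N pq.2 : ℝ) ≤ x := by nlinarith [h.1, h.2]
      exact ⟨⟨this, h.1⟩, ⟨this, h.2⟩⟩
  have hs1 : ∑ pq ∈ D1, f pq = ∑ p ∈ BP y, 1 / (N p : ℝ) * ∑ q ∈ BP (x / N p), 1 / (N q : ℝ) := by
    rw [Finset.sum_congr rfl (fun p _ => Finset.mul_sum _ _ _), Finset.sum_sigma']
    refine Finset.sum_bij' (fun a _ => ⟨a.1, a.2⟩) (fun a _ => (a.1, a.2)) ?_ ?_ ?_ ?_ ?_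
    · rintro ⟨p, q⟩ h
      rw [hD1, Finset.mem_filter, hDm] at h
      simp only [Finset.mem_sigma, hBP]
      refine ⟨h.2, ?_⟩
      rw [le_div_iff₀ (by linarith [hN2 p]), mul_comm]
      exact h.1
    · rintro ⟨p, q⟩ h
      simp only [Finset.mem_sigma, hBP] at h
      rw [hD1, Finset.mem_filter, hDm]
      refine ⟨?_, h.1⟩
      rw [le_div_iff₀ (by linarith [hN2 p]), mul_comm] at h
      exact h.2
    · rintro ⟨p, q⟩ _; rfl
    · rintro ⟨p, q⟩ _; rfl
    · rintro ⟨p, q⟩ _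
      simp only [hf]
      rw [one_div_mul_one_div]
  have hs2 : ∑ pq ∈ D2, f pq = ∑ pq ∈ D1, f pq := by
    refine Finset.sum_bij' (fun a _ => (a.2, a.1)) (fun a _ => (a.2, a.1)) ?_ ?_ ?_ ?_ ?_
    · rintro ⟨p, q⟩ h
      rw [hD2, Finset.mem_filter, hDm] at h
      rw [hD1, Finset.mem_filter, hDm]
      exact ⟨by rw [mul_comm]; exact h.1, h.2⟩
    · rintro ⟨p, q⟩ h
      rw [hD1, Finset.mem_filter, hDm] at h
      rw [hD2, Finset.mem_filter, hDm]
      exact ⟨by rw [mul_comm]; exact h.1, h.2⟩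
    · rintro ⟨p, q⟩ _; rfl
    · rintro ⟨p, q⟩ _; rfl
    · rintro ⟨p, q⟩ _
      simp only [hf]
      rw [mul_comm]
  have hs3 : ∑ pq ∈ BP y ×ˢ BP y, f pq = (∑ p ∈ BP y, 1 / (N p : ℝ)) ^ 2 := by
    rw [sq, Finset.sum_mul_sum, Finset.sum_product]
    refine Finset.sum_congr rfl fun p _ => Finset.sum_congr rfl fun q _ => ?_
    simp only [hf]
    rw [one_div_mul_one_div]
  have h := Finset.sum_union_inter (s₁ := D1) (s₂ := D2) (f := f)
  rw [hU, hInt, hs2, hs3, hs1] at h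
  linarith

set_option maxHeartbeats 1000000 in
theorem pp_assem {P : Type*} (N : P → ℕ) (hN : ∀ p, 2 ≤ N p) (BP : ℝ → Finset P)
    (hBP : ∀ x p, p ∈ BP x ↔ (N p : ℝ) ≤ x) (C A C' x : ℝ) (hC : 0 ≤ C) (hC' : 0 ≤ C')
    (hS : ∀ x : ℝ, 3 / 2 ≤ x →
      |(∑ p ∈ BP x, 1 / (N p : ℝ)) - (Real.log (Real.log x) + A)| ≤ C / Real.log x)
    (hx : 3 ≤ x) (hL : 1 ≤ Real.log (Real.log x))
    (hin : |(∑ p ∈ BP (Real.sqrt x), 1 / (N p : ℝ) * Real.log (1 - Real.log (N p) / Real.log x))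
        + ppLi (1 / 2)| ≤ C' * (Real.log (Real.log x) / Real.log x)) :
    |2 * (∑ p ∈ BP (Real.sqrt x), 1 / (N p : ℝ) * ∑ q ∈ BP (x / N p), 1 / (N q : ℝ)) -
        (∑ p ∈ BP (Real.sqrt x), 1 / (N p : ℝ)) ^ 2 - Real.log (Real.log x) ^ 2
        - 2 * A * Real.log (Real.log x) - A ^ 2 - Bconst| ≤
      (4 * C * (1 + |A| + Real.log 2 + 2 * C) + 2 * C' + 4 * C * Real.log 2 + 4 * C ^ 2) *
        (Real.log (Real.log x) / Real.log x) := by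
  set V := Real.log x with hV
  set L := Real.log V with hLd
  have hx0 : 0 < x := by linarith
  have hV1 : 1 < V := by
    have : Real.exp 1 < 3 := by linarith [Real.exp_one_lt_d9]
    rw [hV, Real.lt_log_iff_exp_lt hx0]; linarith
  have hV0 : 0 < V := by linarith
  set y := Real.sqrt x with hy
  have hy2 : y * y = x := Real.mul_self_sqrt hx0.le
  have hy0 : 0 < y := Real.sqrt_pos.mpr hx0
  have hy32 : 3 / 2 ≤ y := by nlinarith
  have hly : Real.log y = V / 2 := by
    rw [hy, Real.log_sqrt hx0.le]
  have hN2 : ∀ p, (2 : ℝ) ≤ N p := fun p => by exact_mod_cast hN p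
  have l2 : 0 < Real.log 2 := Real.log_pos (by norm_num)
  set s := ∑ p ∈ BP y, 1 / (N p : ℝ) with hs
  set J := ∑ p ∈ BP y, 1 / (N p : ℝ) * Real.log (1 - Real.log (N p) / V) with hJ
  set T := ∑ p ∈ BP y, 1 / (N p : ℝ) * ∑ q ∈ BP (x / N p), 1 / (N q : ℝ) with hT
  have hs0 : 0 ≤ s := Finset.sum_nonneg fun p _ => by positivity
  have hse : |s - (L - Real.log 2 + A)| ≤ 2 * C / V := by
    have := hS y hy32
    rw [hly, Real.log_div hV0.ne' (by norm_num)] at this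
    calc _ ≤ C / (V / 2) := this
      _ = 2 * C / V := by field_simp
  have hTJ : |T - ((L + A) * s + J)| ≤ s * (2 * C / V) := by
    have e : T - ((L + A) * s + J) = ∑ p ∈ BP y, 1 / (N p : ℝ) *
        ((∑ q ∈ BP (x / N p), 1 / (N q : ℝ)) - (L + Real.log (1 - Real.log (N p) / V) + A)) := by
      rw [hT, hs, hJ, Finset.mul_sum, ← Finset.sum_add_distrib, ← Finset.sum_sub_distrib]
      exact Finset.sum_congr rfl fun p _ => by ring
    rw [e, hs, Finset.sum_mul]
    refine (Finset.abs_sum_le_sum_abs _ _).trans (Finset.sum_le_sum fun p hp => ?_)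
    have hpy : (N p : ℝ) ≤ y := (hBP _ _).mp hp
    have hp0 : (0 : ℝ) < N p := by linarith [hN2 p]
    rw [abs_mul, abs_of_nonneg (show (0 : ℝ) ≤ 1 / (N p : ℝ) by positivity)]
    refine mul_le_mul_of_nonneg_left ?_ (by positivity)
    have hxp : y ≤ x / N p := by
      rw [le_div_iff₀ hp0]; nlinarith
    have hlp : Real.log (N p) ≤ V / 2 := by
      rw [← hly]; exact Real.log_le_log hp0 hpy
    have hlx : Real.log (x / N p) = V * (1 - Real.log (N p) / V) := by
      rw [Real.log_div hx0.ne' hp0.ne', ← hV]; field_simp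
    have hu : Real.log (N p) / V ≤ 1 / 2 := by
      rw [div_le_iff₀ hV0]; linarith
    have h := hS (x / N p) (hy32.trans hxp)
    have hll : Real.log (Real.log (x / N p)) = L + Real.log (1 - Real.log (N p) / V) := by
      rw [hlx, Real.log_mul hV0.ne' (by linarith)]
    rw [hll] at h
    refine h.trans ?_
    have h2 : V / 2 ≤ Real.log (x / N p) := by
      rw [← hly]; exact Real.log_le_log hy0 hxp
    calc C / Real.log (x / N p) ≤ C / (V / 2) := by gcongr
      _ = 2 * C / V := by field_simp
  have hli := ppLi_half
  set ε := s - (L - Real.log 2 + A) with hε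
  set δ := T - ((L + A) * s + J) with hδ
  set ρ := J + ppLi (1 / 2) with hρ
  have e : 2 * T - s ^ 2 - L ^ 2 - 2 * A * L - A ^ 2 - Bconst =
      2 * δ + 2 * ρ + 2 * Real.log 2 * ε - ε ^ 2 := by
    have e1 : T = δ + (L + A) * s + J := by rw [hδ]; ring
    have e2 : J = ρ - ppLi (1 / 2) := by rw [hρ]; ring
    have e3 : s = ε + (L - Real.log 2 + A) := by rw [hε]; ring
    have e4 : ppLi (1 / 2) = (Real.pi ^ 2 / 6 - Real.log 2 ^ 2) / 2 := by linarith
    rw [e1, e2, e4, e3]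
    unfold Bconst
    ring
  rw [e]
  have hVL : 1 / V ≤ L / V := by gcongr
  have hsb : s ≤ (1 + |A| + Real.log 2 + 2 * C) * L := by
    have h1 := (abs_le.mp hse).2
    have h2 : 2 * C / V ≤ 2 * C := div_le_self (by positivity) hV1.le
    have h3 := le_abs_self A
    have h4 : s ≤ L + |A| + 2 * C := by rw [hε] at h1; linarith
    have h5 : 0 ≤ |A| := abs_nonneg A
    nlinarith [mul_nonneg h5 (sub_nonneg.mpr hL), mul_nonneg hC (sub_nonneg.mpr hL),
      mul_nonneg l2.le (by linarith : (0:ℝ) ≤ L)]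
  have b1 : |δ| ≤ 2 * C * (1 + |A| + Real.log 2 + 2 * C) * (L / V) := by
    refine hTJ.trans ?_
    calc s * (2 * C / V) ≤ ((1 + |A| + Real.log 2 + 2 * C) * L) * (2 * C / V) := by gcongr
      _ = _ := by ring
  have b2 : |ε| ≤ 2 * C * (L / V) := by
    refine hse.trans ?_
    calc 2 * C / V = 2 * C * (1 / V) := by ring
      _ ≤ _ := by gcongr
  have b3 : ε ^ 2 ≤ 4 * C ^ 2 * (L / V) := by
    have h2 : 2 * C / V ≤ 2 * C := div_le_self (by positivity) hV1.le
    rw [← sq_abs]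
    calc |ε| ^ 2 = |ε| * |ε| := by ring
      _ ≤ (2 * C * (L / V)) * (2 * C) := by
        gcongr
        exact hse.trans h2
      _ = _ := by ring
  have t1 := abs_le.mp b1
  have t2 := abs_le.mp hin
  have t3 := abs_le.mp b2
  have t4 := sq_nonneg ε
  have u1 : Real.log 2 * ε ≤ Real.log 2 * (2 * C * (L / V)) :=
    mul_le_mul_of_nonneg_left t3.2 l2.le
  have u2 : Real.log 2 * (-(2 * C * (L / V))) ≤ Real.log 2 * ε :=
    mul_le_mul_of_nonneg_left t3.1 l2.le
  have u3 : 0 ≤ 4 * C ^ 2 * (L / V) := t4.trans b3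
  rw [abs_le]
  constructor <;> linarith

theorem pp_main {P : Type*} (N : P → ℕ)
    (hN : ∀ p, 2 ≤ N p) (κ θ : ℝ) (hstar : StarCond N κ θ)
    (A : ℝ) (hA : IsMertens N A) :
    (fun x : ℝ =>
        (∑ᶠ pq ∈ {pq : P × P | (N pq.1 : ℝ) * (N pq.2 : ℝ) ≤ x},
            1 / ((N pq.1 : ℝ) * (N pq.2 : ℝ)))
          - Real.log (Real.log x) ^ 2 - 2 * A * Real.log (Real.log x)
          - A ^ 2 - Bconst)
      =O[atTop] fun x : ℝ => Real.log (Real.log x) / Real.log x := by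
  obtain ⟨hκ, hθ0, hθ1, hO⟩ := hstar
  obtain ⟨c, hc0, hc⟩ := hO.exists_pos
  have hc := hc.bound
  -- finiteness
  have hfin : ∀ x : ℝ, {m : P →₀ ℕ | (Nm N m : ℝ) ≤ x}.Finite := by
    intro x
    have hlim : Tendsto (fun t : ℝ => t ^ (1 - θ)) atTop atTop :=
      tendsto_rpow_atTop (by linarith)
    have h1 := hlim.eventually_gt_atTop (c / κ)
    obtain ⟨t, ht, ht1, htx, ht0⟩ :=
      (hc.and (h1.and ((eventually_ge_atTop x).and (eventually_gt_atTop 0)))).exists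
    refine Set.Finite.subset (s := {m : P →₀ ℕ | (Nm N m : ℝ) ≤ t}) ?_ ?_
    · by_contra hinf
      rw [Set.Infinite.ncard hinf] at ht
      rw [Real.norm_eq_abs, Real.norm_eq_abs, abs_of_pos (Real.rpow_pos_of_pos ht0 _)] at ht
      simp only [Nat.cast_zero, zero_sub, abs_neg] at ht
      rw [abs_of_pos (by positivity)] at ht
      rw [div_lt_iff₀ hκ] at ht1
      have e : t = t ^ (1 - θ) * t ^ θ := by
        rw [← Real.rpow_add ht0]; simp
      have hp := Real.rpow_pos_of_pos ht0 θ
      have := mul_lt_mul_of_pos_right ht1 hp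
      have e2 : κ * t = t ^ (1 - θ) * κ * t ^ θ := by
        calc κ * t = κ * (t ^ (1 - θ) * t ^ θ) := by rw [← e]
          _ = _ := by ring
      linarith
    · intro m hm
      exact le_trans hm htx
  set BM : ℝ → Finset (P →₀ ℕ) := fun x => (hfin x).toFinset with hBMd
  have hBM : ∀ x m, m ∈ BM x ↔ (Nm N m : ℝ) ≤ x := by
    intro x m; simp [hBMd]
  have hfinP : ∀ x : ℝ, {p : P | (N p : ℝ) ≤ x}.Finite := by
    intro x
    refine Set.Finite.of_finite_image (f := fun p => (Finsupp.single p 1 : P →₀ ℕ)) ?_ ?_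
    · refine (hfin x).subset ?_
      rintro _ ⟨p, hp, rfl⟩
      simp only [Set.mem_ofPred_eq] at hp ⊢
      rw [ppNm_single, pow_one]; exact hp
    · intro p _ q _ h
      exact Finsupp.single_left_injective one_ne_zero h
  set BP : ℝ → Finset P := fun x => (hfinP x).toFinset with hBPd
  have hBP : ∀ x p, p ∈ BP x ↔ (N p : ℝ) ≤ x := by
    intro x p; simp [hBPd]
  have hcard : ∀ x, ({m : P →₀ ℕ | (Nm N m : ℝ) ≤ x}.ncard : ℝ) = ((BM x).card : ℝ) := by
    intro x
    rw [Set.ncard_eq_toFinset_card _ (hfin x)]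
  obtain ⟨X0, hX0⟩ := eventually_atTop.mp hc
  set X := max X0 1 with hX
  have hX1 : 1 ≤ X := le_max_right _ _
  have hI : ∀ t : ℝ, 1 ≤ t → |((BM t).card : ℝ) - κ * t| ≤
      (c + ((BM X).card + κ * X)) * t ^ (1 - 2 * ((1 - θ) / 2)) := by
    intro t ht
    have e : 1 - 2 * ((1 - θ) / 2) = θ := by ring
    rw [e]
    have hp1 : 1 ≤ t ^ θ := Real.one_le_rpow ht hθ0
    have hD : 0 ≤ ((BM X).card : ℝ) + κ * X := by positivity
    rcases le_total X t with h | h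
    · have := hX0 t ((le_max_left _ _).trans h)
      rw [hcard, Real.norm_eq_abs, Real.norm_eq_abs, abs_of_nonneg (by positivity : 0 ≤ t ^ θ)]
        at this
      refine this.trans ?_
      gcongr
      linarith
    · have hsub : ((BM t).card : ℝ) ≤ (BM X).card := by
        have : BM t ⊆ BM X := fun m hm => (hBM _ _).mpr (((hBM _ _).mp hm).trans h)
        exact_mod_cast Finset.card_le_card this
      have hk : κ * t ≤ κ * X := by gcongr
      have hk0 : 0 ≤ κ * t := by positivity
      have hn : (0 : ℝ) ≤ (BM t).card := by positivity
      have h1 : |((BM t).card : ℝ) - κ * t| ≤ (BM X).card + κ * X := by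
        rw [abs_le]; constructor <;> linarith
      refine h1.trans ?_
      nlinarith
  obtain ⟨CR, hCR, hR⟩ := pp_R N hN BM hBM BP hBP κ _ ((1 - θ) / 2) hκ (by linarith)
    (by positivity) hI
  have hA2 : Tendsto (fun x : ℝ => (∑ p ∈ BP x, 1 / (N p : ℝ)) - Real.log (Real.log x))
      atTop (𝓝 A) := by
    refine Tendsto.congr (fun x => ?_) hA
    have : {p : P | (N p : ℝ) ≤ x} = ↑(BP x) := by ext p; simp [hBP]
    rw [this, finsum_mem_coe_finset]
  have hS := pp_S N hN BP hBP CR hCR hR A hA2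
  obtain ⟨C', hC', hin⟩ := pp_inner N hN BP hBP (3 * CR) A (by positivity) hS
  have hll : Tendsto (fun x : ℝ => Real.log (Real.log x)) atTop atTop :=
    Real.tendsto_log_atTop.comp Real.tendsto_log_atTop
  refine IsBigO.of_bound (4 * (3 * CR) * (1 + |A| + Real.log 2 + 2 * (3 * CR)) + 2 * C' +
      4 * (3 * CR) * Real.log 2 + 4 * (3 * CR) ^ 2) ?_
  refine ((eventually_ge_atTop (3 : ℝ)).and (hll.eventually_ge_atTop 1)).mono ?_
  rintro x ⟨hx, hL⟩
  rw [pp_hyper N hN BP hBP x (by linarith)]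
  have h := pp_assem N hN BP hBP (3 * CR) A C' x (by positivity) hC' hS hx hL (hin x hx hL)
  have hlx : 0 < Real.log x := Real.log_pos (by linarith)
  rw [Real.norm_eq_abs, Real.norm_eq_abs,
    abs_of_nonneg (div_nonneg (by linarith : 0 ≤ Real.log (Real.log x)) hlx.le)]
  exact h

/-- Mertens-type estimate for sums over pairs of prime elements. -/
theorem sum_pairs_primes {P : Type*} [Countable P] (N : P → ℕ)
    (hN : ∀ p, 2 ≤ N p) (κ θ : ℝ) (hstar : StarCond N κ θ)
    (A : ℝ) (hA : IsMertens N A) :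
    (fun x : ℝ =>
        (∑ᶠ pq ∈ {pq : P × P | (N pq.1 : ℝ) * (N pq.2 : ℝ) ≤ x},
            1 / ((N pq.1 : ℝ) * (N pq.2 : ℝ)))
          - Real.log (Real.log x) ^ 2 - 2 * A * Real.log (Real.log x)
          - A ^ 2 - Bconst)
      =O[atTop] fun x : ℝ => Real.log (Real.log x) / Real.log x := by
  exact pp_main N hN κ θ hstar A hA
end
end

section
/- Under Condition (★), for every integer h ≥ 2, the counting function T_h(x) := #{(a₀, a₁, …, a_{h−1}) ∈ M^h : N(a₀)^h · N(a₁)^{h+1} ⋯ N(a_{h−1})^{2h−1} ≤ x} satisfies T_h(x) = κ·(∏_{i=1}^{h−1} ζ_M(1 + i/h))·x^{1/h} + O_h(R_{T_h}(x)) as x → ∞, where R_{T_h}(x) := x^{θ/h} if h/(h+1) < θ; R_{T_h}(x) := x^{1/(h+1)}·log x if θ = h/(h+i) for some i ∈ {1,…,h−1}; and R_{T_h}(x) := x^{1/(h+1)} if h/(h+1) > θ and θ ≠ h/(h+i) for all i ∈ {1,…,h−1}; the implied constant depends only on h and the data P, N, κ, θ. -/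
open Filter Topology Asymptotics
open scoped Classical

noncomputable section

def CB {α : Type*} (f : α → ℝ) (C β : ℝ) : Prop :=
  ∀ x : ℝ, 0 < x → ∀ F : Finset α, (∀ a ∈ F, f a ≤ x) → (F.card : ℝ) ≤ C * x ^ β

lemma rp_anti {x y σ : ℝ} (hx : 0 < x) (hxy : x ≤ y) (hσ : 0 ≤ σ) : y ^ (-σ) ≤ x ^ (-σ) :=
  Real.rpow_le_rpow_of_nonpos hx hxy (by linarith)

lemma CB_tail_aux {α : Type*} {f : α → ℝ} {C β σ : ℝ} (hf : CB f C β) (hC : 0 ≤ C)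
    (hβ : 0 < β) (hσ : β < σ) (K : ℕ) : ∀ x : ℝ, 0 < x → ∀ F : Finset α,
      (∀ a ∈ F, x < f a ∧ f a ≤ 2 ^ K * x) →
      ∑ a ∈ F, f a ^ (-σ) ≤ C * 2 ^ β / (1 - 2 ^ (β - σ)) * x ^ (β - σ) := by
  have h2 : (2 : ℝ) ^ (β - σ) < 1 := Real.rpow_lt_one_of_one_lt_of_neg (by norm_num) (by linarith)
  have h3 : 0 ≤ C * 2 ^ β / (1 - 2 ^ (β - σ)) := by
    apply div_nonneg (by positivity); linarith
  induction K with
  | zero =>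
    intro x hx F hF
    have : F = ∅ := by
      apply Finset.eq_empty_of_forall_notMem
      intro a ha
      have := hF a ha
      simp at this
      linarith
    subst this
    simp only [Finset.sum_empty]
    positivity
  | succ K ih =>
    intro x hx F hF
    rw [← Finset.sum_filter_add_sum_filter_not F (fun a => f a ≤ 2 * x)]
    have e1 : ∑ a ∈ F with f a ≤ 2 * x, f a ^ (-σ) ≤ C * 2 ^ β * x ^ (β - σ) := by
      calc _ ≤ ∑ a ∈ F with f a ≤ 2 * x, x ^ (-σ) := by
            apply Finset.sum_le_sum
            intro a ha
            rw [Finset.mem_filter] at ha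
            exact rp_anti hx (hF a ha.1).1.le (by linarith)
        _ = ((F.filter (fun a => f a ≤ 2 * x)).card : ℝ) * x ^ (-σ) := by simp
        _ ≤ (C * (2 * x) ^ β) * x ^ (-σ) := by
            gcongr
            apply hf _ (by positivity)
            intro a ha
            exact (Finset.mem_filter.1 ha).2
        _ = _ := by
            rw [Real.mul_rpow (by norm_num) hx.le, sub_eq_add_neg β σ, Real.rpow_add hx]; ring
    have e2 := ih (2 * x) (by positivity) (F.filter (fun a => ¬ f a ≤ 2 * x)) (by
      intro a ha
      rw [Finset.mem_filter, not_le] at ha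
      refine ⟨ha.2, (hF a ha.1).2.trans (le_of_eq (by ring))⟩)
    rw [Real.mul_rpow (by norm_num) hx.le] at e2
    refine (add_le_add e1 e2).trans (le_of_eq ?_)
    have : (1 - (2 : ℝ) ^ (β - σ)) ≠ 0 := by linarith
    field_simp
    ring

lemma CB_tail {α : Type*} {f : α → ℝ} {C β σ : ℝ} (hf : CB f C β) (hC : 0 ≤ C)
    (hβ : 0 < β) (hσ : β < σ) (x : ℝ) (hx : 0 < x) (F : Finset α)
      (hF : ∀ a ∈ F, x < f a) :
      ∑ a ∈ F, f a ^ (-σ) ≤ C * 2 ^ β / (1 - 2 ^ (β - σ)) * x ^ (β - σ) := by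
  have : ∀ F : Finset α, ∃ K : ℕ, ∀ a ∈ F, f a ≤ 2 ^ K * x := by
    intro F
    obtain ⟨B, hB⟩ := (F.image f).bddAbove
    obtain ⟨K, hK⟩ := pow_unbounded_of_one_lt (B / x) (one_lt_two : (1 : ℝ) < 2)
    refine ⟨K, fun a ha => ?_⟩
    rw [div_lt_iff₀ hx] at hK
    exact (hB (by simpa using ⟨a, ha, rfl⟩)).trans hK.le
  obtain ⟨K, hK⟩ := this F
  exact CB_tail_aux hf hC hβ hσ K x hx F (fun a ha => ⟨hF a ha, hK a ha⟩)

lemma CB_summable {α : Type*} {f : α → ℝ} {C β σ : ℝ} (hf : CB f C β) (hC : 0 ≤ C)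
    (hβ : 0 < β) (hσ : β < σ) (h1 : ∀ a, 1 ≤ f a) : Summable (fun a => f a ^ (-σ)) := by
  apply summable_of_sum_le (c := C * 2 ^ β / (1 - 2 ^ (β - σ)) * (1 / 2) ^ (β - σ))
  · intro a
    exact Real.rpow_nonneg (by linarith [h1 a]) _
  · intro F
    exact CB_tail hf hC hβ hσ _ (by norm_num) F (fun a _ => by linarith [h1 a])

lemma CB_trunc {α : Type*} {f : α → ℝ} {C β σ : ℝ} (hf : CB f C β) (hC : 0 ≤ C)
    (hσ0 : 0 ≤ σ) (hσ : σ < β) (h1 : ∀ a, 1 ≤ f a) (K : ℕ) :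
    ∀ x : ℝ, 0 < x → x < 2 ^ K → ∀ F : Finset α, (∀ a ∈ F, f a ≤ x) →
      ∑ a ∈ F, f a ^ (-σ) ≤ C * 2 ^ σ / (1 - 2 ^ (σ - β)) * x ^ (β - σ) := by
  have h2 : (2 : ℝ) ^ (σ - β) < 1 := Real.rpow_lt_one_of_one_lt_of_neg (by norm_num) (by linarith)
  have h3 : 0 ≤ C * 2 ^ σ / (1 - 2 ^ (σ - β)) := by
    apply div_nonneg (by positivity); linarith
  induction K with
  | zero =>
    intro x hx hxK F hF
    have : F = ∅ := by
      apply Finset.eq_empty_of_forall_notMem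
      intro a ha
      have := hF a ha
      have := h1 a
      simp at hxK
      linarith
    subst this
    simp only [Finset.sum_empty]
    positivity
  | succ K ih =>
    intro x hx hxK F hF
    rw [← Finset.sum_filter_add_sum_filter_not F (fun a => f a ≤ x / 2)]
    have e1 : ∑ a ∈ F with ¬ f a ≤ x / 2, f a ^ (-σ) ≤ C * 2 ^ σ * x ^ (β - σ) := by
      calc _ ≤ ∑ a ∈ F with ¬ f a ≤ x / 2, (x / 2) ^ (-σ) := by
            apply Finset.sum_le_sum
            intro a ha
            rw [Finset.mem_filter, not_le] at ha
            exact rp_anti (by positivity) ha.2.le hσ0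
        _ = ((F.filter (fun a => ¬ f a ≤ x / 2)).card : ℝ) * (x / 2) ^ (-σ) := by simp
        _ ≤ (C * x ^ β) * (x / 2) ^ (-σ) := by
            gcongr
            apply hf _ hx
            intro a ha
            exact hF a (Finset.mem_filter.1 ha).1
        _ = _ := by
            rw [Real.div_rpow hx.le (by norm_num), sub_eq_add_neg β σ, Real.rpow_add hx,
              Real.rpow_neg (by norm_num : (0:ℝ) ≤ 2)]
            field_simp
    have e2 := ih (x / 2) (by positivity) (by rw [pow_succ] at hxK; linarith)
      (F.filter (fun a => f a ≤ x / 2)) (by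
      intro a ha
      exact (Finset.mem_filter.1 ha).2)
    have e3 : (x / 2) ^ (β - σ) = 2 ^ (σ - β) * x ^ (β - σ) := by
      rw [Real.div_rpow hx.le (by norm_num), ← neg_sub β σ, Real.rpow_neg (by norm_num)]
      field_simp
    rw [e3] at e2
    refine (add_le_add e2 e1).trans (le_of_eq ?_)
    have : (1 - (2 : ℝ) ^ (σ - β)) ≠ 0 := by linarith
    field_simp
    ring

lemma CB_log {α : Type*} {f : α → ℝ} {C σ : ℝ} (hf : CB f C σ) (hC : 0 ≤ C)
    (hσ0 : 0 ≤ σ) (h1 : ∀ a, 1 ≤ f a) (K : ℕ) :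
    ∀ x : ℝ, 0 < x → x < 2 ^ K → ∀ F : Finset α, (∀ a ∈ F, f a ≤ x) →
      ∑ a ∈ F, f a ^ (-σ) ≤ C * 2 ^ σ * K := by
  induction K with
  | zero =>
    intro x hx hxK F hF
    have : F = ∅ := by
      apply Finset.eq_empty_of_forall_notMem
      intro a ha
      have := hF a ha
      have := h1 a
      simp at hxK
      linarith
    subst this
    simp
  | succ K ih =>
    intro x hx hxK F hF
    rw [← Finset.sum_filter_add_sum_filter_not F (fun a => f a ≤ x / 2)]
    have e1 : ∑ a ∈ F with ¬ f a ≤ x / 2, f a ^ (-σ) ≤ C * 2 ^ σ := by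
      calc _ ≤ ∑ a ∈ F with ¬ f a ≤ x / 2, (x / 2) ^ (-σ) := by
            apply Finset.sum_le_sum
            intro a ha
            rw [Finset.mem_filter, not_le] at ha
            exact rp_anti (by positivity) ha.2.le hσ0
        _ = ((F.filter (fun a => ¬ f a ≤ x / 2)).card : ℝ) * (x / 2) ^ (-σ) := by simp
        _ ≤ (C * x ^ σ) * (x / 2) ^ (-σ) := by
            gcongr
            apply hf _ hx
            intro a ha
            exact hF a (Finset.mem_filter.1 ha).1
        _ = _ := by
            rw [Real.div_rpow hx.le (by norm_num), Real.rpow_neg hx.le,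
              Real.rpow_neg (by norm_num : (0:ℝ) ≤ 2)]
            have := (Real.rpow_pos_of_pos hx σ).ne'
            field_simp
    have e2 := ih (x / 2) (by positivity) (by rw [pow_succ] at hxK; linarith)
      (F.filter (fun a => f a ≤ x / 2)) (by
      intro a ha
      exact (Finset.mem_filter.1 ha).2)
    refine (add_le_add e2 e1).trans (le_of_eq ?_)
    push_cast
    ring

/-- weighted product of norms -/
def fW {μ : Type*} (n : μ → ℝ) (e k : ℕ) (b : Fin k → μ) : ℝ := ∏ j, n (b j) ^ (e + (j : ℕ))

lemma fW_succ {μ : Type*} (n : μ → ℝ) (e k : ℕ) (a : Fin (k + 1) → μ) :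
    fW n e (k + 1) a = n (a 0) ^ e * fW n (e + 1) k (Fin.tail a) := by
  unfold fW
  rw [Fin.prod_univ_succ]
  congr 1
  apply Finset.prod_congr rfl
  intro j _
  simp only [Fin.val_succ, Fin.tail]
  congr 1
  ring

lemma fW_one_le {μ : Type*} {n : μ → ℝ} (hn : ∀ m, 1 ≤ n m) (e k : ℕ) (b : Fin k → μ) :
    1 ≤ fW n e k b := by
  unfold fW
  exact Finset.one_le_prod (fun j _ => one_le_pow₀ (hn _))

lemma mem_iff {u g x : ℝ} {e : ℕ} (he : e ≠ 0) (hu : 0 ≤ u) (hg : 0 < g) (hx : 0 ≤ x) :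
    u ^ e * g ≤ x ↔ u ≤ (x / g) ^ (1 / (e : ℝ)) := by
  rw [← le_div_iff₀ hg, one_div, Real.le_rpow_inv_iff_of_pos hu (by positivity) (by positivity),
    Real.rpow_natCast]

lemma div_rp {x g s : ℝ} (hx : 0 ≤ x) (hg : 0 < g) : (x / g) ^ s = x ^ s * g ^ (-s) := by
  rw [Real.div_rpow hx hg.le, Real.rpow_neg hg.le, div_eq_mul_inv]

lemma tail_inj {μ : Type*} {k : ℕ} {b : Fin k → μ} {S : Set (Fin (k + 1) → μ)}
    (hS : ∀ a ∈ S, Fin.tail a = b) : Set.InjOn (fun a : Fin (k + 1) → μ => a 0) S := by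
  intro a ha a' ha' h0
  rw [← Fin.cons_self_tail a, ← Fin.cons_self_tail a', hS a ha, hS a' ha']
  simp only at h0
  rw [h0]

lemma CB_fW {μ : Type*} {n : μ → ℝ} (hn : ∀ m, 1 ≤ n m) {C : ℝ} (hC : 0 ≤ C) (hI : CB n C 1)
    (k : ℕ) : ∀ e : ℕ, 1 ≤ e → ∃ D, 0 ≤ D ∧ CB (fW n e (k + 1)) D (1 / (e : ℝ)) := by
  have key : ∀ k e : ℕ, 1 ≤ e → Summable (fun b : Fin k → μ => fW n (e+1) k b ^ (-(1 / (e : ℝ)))) →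
      ∃ D, 0 ≤ D ∧ CB (fW n e (k + 1)) D (1 / (e : ℝ)) := by
    intro k e he hs
    have hnn : ∀ b : Fin k → μ, 0 ≤ fW n (e+1) k b ^ (-(1 / (e : ℝ))) := fun b =>
      Real.rpow_nonneg (by linarith [fW_one_le hn (e+1) k b]) _
    refine ⟨C * ∑' b : Fin k → μ, fW n (e+1) k b ^ (-(1 / (e : ℝ))),
      mul_nonneg hC (tsum_nonneg hnn), ?_⟩
    intro x hx F hF
    rw [Finset.card_eq_sum_card_image (fun a => Fin.tail a) F]
    push_cast
    calc _ ≤ ∑ b ∈ F.image (fun a => Fin.tail a),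
          C * x ^ (1 / (e : ℝ)) * fW n (e+1) k b ^ (-(1 / (e : ℝ))) := by
          apply Finset.sum_le_sum
          intro b hb
          have hg : 0 < fW n (e+1) k b := by linarith [fW_one_le hn (e+1) k b]
          rw [mul_assoc, ← div_rp hx.le hg]
          rw [← Finset.card_image_of_injOn (f := fun a : Fin (k+1) → μ => a 0) (tail_inj (b := b) (by
            intro a ha
            simpa using (Finset.mem_filter.1 (Finset.mem_coe.1 ha)).2))]
          have := hI ((x / fW n (e+1) k b) ^ (1 / (e : ℝ))) (by positivity)
            ((F.filter (fun a => Fin.tail a = b)).image (fun a => a 0)) (by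
              intro m hm
              rw [Finset.mem_image] at hm
              obtain ⟨a, ha, rfl⟩ := hm
              rw [Finset.mem_filter] at ha
              rw [← mem_iff (by omega) (by linarith [hn (a 0)]) hg hx.le]
              have := hF a ha.1
              rwa [fW_succ, ha.2] at this)
          rwa [Real.rpow_one] at this
      _ = C * (∑ b ∈ F.image (fun a => Fin.tail a), fW n (e+1) k b ^ (-(1 / (e : ℝ))))
            * x ^ (1 / (e : ℝ)) := by
          rw [← Finset.mul_sum]; ring
      _ ≤ _ := by
          gcongr
          exact hs.sum_le_tsum _ (fun b _ => hnn b)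
  induction k with
  | zero =>
    intro e he
    exact key 0 e he (Summable.of_finite)
  | succ k ih =>
    intro e he
    apply key _ e he
    obtain ⟨D, hD, hCB⟩ := ih (e+1) (by omega)
    have he' : (0 : ℝ) < e := by positivity
    apply CB_summable hCB hD (by positivity) _ (fW_one_le hn _ _)
    push_cast
    apply one_div_lt_one_div_of_lt he' (by linarith)

lemma hasSum_pi {μ : Type*} (k : ℕ) : ∀ (g : Fin k → μ → ℝ), (∀ j m, 0 ≤ g j m) →
    (∀ j, Summable (g j)) → HasSum (fun b : Fin k → μ => ∏ j, g j (b j)) (∏ j, ∑' m, g j m) := by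
  induction k with
  | zero =>
    intro g _ _
    simp only [Finset.univ_eq_empty, Finset.prod_empty]
    convert hasSum_unique (fun b : Fin 0 → μ => (1 : ℝ)) 
  | succ k ih =>
    intro g hg hs
    have h1 := ih (fun j => g j.succ) (fun j => hg j.succ) (fun j => hs j.succ)
    have h2 := (hs 0).mul_of_nonneg h1.summable (hg 0)
      (fun b => Finset.prod_nonneg (fun j _ => hg _ _))
    have h3 := (hs 0).hasSum.mul h1 h2
    rw [Fin.prod_univ_succ]
    rw [← (Fin.consEquiv (fun _ : Fin (k+1) => μ)).hasSum_iff]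
    refine Eq.mp (congrArg (fun q => HasSum q _) ?_) h3
    funext p
    simp [Fin.prod_univ_succ, Fin.consEquiv]

lemma main_abs {μ : Type*} {n : μ → ℝ} (hn : ∀ m, 1 ≤ n m) {κ θ C C0 : ℝ} (hκ : 0 < κ)
    (hC : 0 ≤ C) (hI : CB n C 1) (hfin : ∀ y, {m | n m ≤ y}.Finite)
    (hA : ∀ y, 1 ≤ y → |({m | n m ≤ y}.ncard : ℝ) - κ * y| ≤ C0 * y ^ θ) (k h : ℕ)
    (hh : 1 ≤ h) :
    ∃ D D', 0 ≤ D ∧ 0 ≤ D' ∧ CB (fW n (h+1) (k+1)) D (1 / ((h : ℝ) + 1)) ∧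
    ∀ x : ℝ, 1 ≤ x → ∃ B : Finset (Fin (k+1) → μ), (∀ b ∈ B, fW n (h+1) (k+1) b ≤ x) ∧
      |({a : Fin (k+2) → μ | fW n h (k+2) a ≤ x}.ncard : ℝ) -
        κ * (∑' b, fW n (h+1) (k+1) b ^ (-(1 / (h : ℝ)))) * x ^ (1 / (h : ℝ))| ≤
      C0 * x ^ (θ / h) * (∑ b ∈ B, fW n (h+1) (k+1) b ^ (-(θ / h))) +
        D' * x ^ (1 / ((h : ℝ) + 1)) := by
  obtain ⟨D, hD, hCB⟩ := CB_fW hn hC hI k (h+1) (by omega)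
  push_cast at hCB
  have hh0 : (0 : ℝ) < h := by positivity
  have hlt : 1 / ((h : ℝ) + 1) < 1 / (h : ℝ) := one_div_lt_one_div_of_lt hh0 (by linarith)
  have hp : 0 < 1 / ((h : ℝ) + 1) := by positivity
  have hs := CB_summable hCB hD hp hlt (fW_one_le hn _ _)
  set g := fW n (h+1) (k+1) with hg
  have g1 : ∀ b, 1 ≤ g b := fW_one_le hn _ _
  have g0 : ∀ b, 0 < g b := fun b => by linarith [g1 b]
  set E := D * 2 ^ (1 / ((h : ℝ) + 1)) / (1 - 2 ^ (1 / ((h : ℝ) + 1) - 1 / (h : ℝ))) with hE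
  have h2 : (2 : ℝ) ^ (1 / ((h : ℝ) + 1) - 1 / (h : ℝ)) < 1 :=
    Real.rpow_lt_one_of_one_lt_of_neg (by norm_num) (by linarith)
  have hE0 : 0 ≤ E := by
    apply div_nonneg (by positivity); linarith
  refine ⟨D, κ * E, hD, by positivity, hCB, ?_⟩
  intro x hx
  have hx0 : 0 < x := by linarith
  have finCB : ∀ {α : Type _} {f : α → ℝ} {C β : ℝ}, CB f C β → {a | f a ≤ x}.Finite := by
    intro α f C β hf
    by_contra hinf
    obtain ⟨N, hN⟩ := exists_nat_gt (C * x ^ β)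
    obtain ⟨F, hF, hc⟩ := (Set.not_finite.1 hinf : Set.Infinite _).exists_subset_card_eq N
    have := hf x hx0 F (fun a ha => hF ha)
    rw [hc] at this
    linarith
  obtain ⟨DT, -, hCBT⟩ := CB_fW hn hC hI (k+1) h hh
  have hTf := finCB hCBT
  have hBf := finCB hCB
  refine ⟨hBf.toFinset, by simp, ?_⟩
  set B := hBf.toFinset with hB
  have memB : ∀ b, b ∈ B ↔ g b ≤ x := by intro b; simp [hB]
  have cnt : ({a : Fin (k+2) → μ | fW n h (k+2) a ≤ x}.ncard : ℝ) =
      ∑ b ∈ B, ({m | n m ≤ (x / g b) ^ (1 / (h : ℝ))}.ncard : ℝ) := by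
    rw [Set.ncard_eq_toFinset_card _ hTf]
    rw [Finset.card_eq_sum_card_fiberwise (f := fun a => Fin.tail a) (t := B)]
    · push_cast
      apply Finset.sum_congr rfl
      intro b hb
      rw [← Finset.card_image_of_injOn (f := fun a : Fin (k+2) → μ => a 0) (tail_inj (b := b) (by
            intro a ha
            simpa using (Finset.mem_filter.1 (Finset.mem_coe.1 ha)).2)), ← Set.ncard_coe_finset]
      congr 2
      ext m
      simp only [Finset.coe_image, Finset.coe_filter, Set.Finite.mem_toFinset, Set.mem_image,
        Set.mem_setOf_eq]
      rw [← mem_iff (by omega) (by linarith [hn m]) (g0 b) hx0.le]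
      constructor
      · rintro ⟨a, ⟨ha, hb⟩, rfl⟩
        rwa [fW_succ, hb] at ha
      · intro hm
        refine ⟨Fin.cons m b, ⟨?_, by simp⟩, by simp⟩
        rw [fW_succ]
        simpa using hm
    · intro a ha
      simp only [Set.Finite.coe_toFinset, Set.mem_setOf_eq] at ha
      rw [fW_succ] at ha
      rw [Finset.mem_coe, memB]
      refine le_trans ?_ ha
      exact le_mul_of_one_le_left (g0 _).le (one_le_pow₀ (hn _))
  have e1 : |(∑ b ∈ B, ({m | n m ≤ (x / g b) ^ (1 / (h : ℝ))}.ncard : ℝ)) -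
      κ * (∑ b ∈ B, g b ^ (-(1 / (h : ℝ)))) * x ^ (1 / (h : ℝ))| ≤
      C0 * x ^ (θ / h) * (∑ b ∈ B, g b ^ (-(θ / h))) := by
    rw [Finset.mul_sum, Finset.sum_mul, ← Finset.sum_sub_distrib, Finset.mul_sum]
    refine (Finset.abs_sum_le_sum_abs _ _).trans (Finset.sum_le_sum ?_)
    intro b hb
    rw [memB] at hb
    have h1 : 1 ≤ (x / g b) ^ (1 / (h : ℝ)) :=
      Real.one_le_rpow (by rwa [one_le_div (g0 b)]) (by positivity)
    have := hA _ h1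
    rw [← Real.rpow_mul (by have := g0 b; positivity), one_div_mul_eq_div,
      div_rp (s := θ / h) hx0.le (g0 b)] at this
    have q : κ * g b ^ (-(1 / (h : ℝ))) * x ^ (1 / (h : ℝ)) = κ * (x / g b) ^ (1 / (h : ℝ)) := by
      rw [div_rp hx0.le (g0 b)]; ring
    rw [q, mul_assoc C0]
    exact this
  have e2 : |(∑' b, g b ^ (-(1 / (h : ℝ)))) - ∑ b ∈ B, g b ^ (-(1 / (h : ℝ)))| ≤
      E * x ^ (1 / ((h : ℝ) + 1) - 1 / (h : ℝ)) := by
    rw [abs_of_nonneg (sub_nonneg.2 (hs.sum_le_tsum _ (fun b _ => Real.rpow_nonneg (g0 b).le _)))]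
    rw [← hs.sum_add_tsum_subtype_compl B, add_sub_cancel_left]
    apply Real.tsum_le_of_sum_le
    · intro b; exact Real.rpow_nonneg (g0 _).le _
    · intro F
      have := CB_tail hCB hD hp hlt x hx0 (F.map (Function.Embedding.subtype _)) (by
        intro b hb
        rw [Finset.mem_map] at hb
        obtain ⟨c, -, rfl⟩ := hb
        have := c.2
        rw [memB, not_le] at this
        exact this)
      rw [Finset.sum_map] at this
      exact this
  rw [cnt]
  have e3 : x ^ (1 / ((h : ℝ) + 1)) = x ^ (1 / ((h : ℝ) + 1) - 1 / (h : ℝ)) * x ^ (1 / (h : ℝ)) := by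
    rw [← Real.rpow_add hx0]; congr 1; ring
  set S := ∑' b, g b ^ (-(1 / (h : ℝ)))
  set S' := ∑ b ∈ B, g b ^ (-(1 / (h : ℝ)))
  set T := ∑ b ∈ B, ({m | n m ≤ (x / g b) ^ (1 / (h : ℝ))}.ncard : ℝ)
  have : T - κ * S * x ^ (1 / (h : ℝ)) = (T - κ * S' * x ^ (1 / (h : ℝ))) -
    κ * (S - S') * x ^ (1 / (h : ℝ)) := by ring
  rw [this]
  refine (abs_sub _ _).trans (add_le_add e1 ?_)
  rw [abs_mul, abs_mul, abs_of_pos hκ, abs_of_nonneg (Real.rpow_nonneg hx0.le _), e3]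
  calc _ ≤ κ * (E * x ^ (1 / ((h : ℝ) + 1) - 1 / (h : ℝ))) * x ^ (1 / (h : ℝ)) := by gcongr
    _ = _ := by ring

lemma star_unpack {μ : Type*} {n : μ → ℝ} (hn : ∀ m, 1 ≤ n m) {κ θ : ℝ} (hκ : 0 < κ)
    (hθ : 0 ≤ θ) (hθ1 : θ < 1)
    (hO : (fun x : ℝ => (({m | n m ≤ x}.ncard : ℝ) - κ * x)) =O[atTop] fun x : ℝ => x ^ θ) :
    (∀ y, {m | n m ≤ y}.Finite) ∧
    ∃ C0, 0 ≤ C0 ∧ ∀ y, 1 ≤ y → |({m | n m ≤ y}.ncard : ℝ) - κ * y| ≤ C0 * y ^ θ := by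
  obtain ⟨c, hc⟩ := hO.bound
  obtain ⟨X, hX⟩ := eventually_atTop.1 hc
  have hX' : ∀ y, X ≤ y → 1 ≤ y → |({m | n m ≤ y}.ncard : ℝ) - κ * y| ≤ c * y ^ θ := by
    intro y hy hy1
    have := hX y hy
    rwa [Real.norm_eq_abs, Real.norm_eq_abs,
      abs_of_nonneg (Real.rpow_nonneg (by linarith) _)] at this
  have hfin : ∀ y, {m | n m ≤ y}.Finite := by
    intro y
    by_contra hinf
    have := (tendsto_rpow_neg_atTop (y := 1 - θ) (by linarith)).eventually
      (gt_mem_nhds (show 0 < κ / (2 * (|c| + 1)) by positivity))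
    obtain ⟨z, hz, hzX, hz1, hzy⟩ := (this.and ((eventually_ge_atTop X).and
      ((eventually_ge_atTop 1).and (eventually_ge_atTop y)))).exists
    have h0 : {m | n m ≤ z}.Infinite := 
      (Set.not_finite.1 hinf : Set.Infinite _).mono (fun m hm => le_trans hm hzy)
    have h1 := hX' z hzX hz1
    rw [h0.ncard] at h1
    have hzp : 0 < z := by linarith
    have hzθ : 0 ≤ z ^ θ := Real.rpow_nonneg hzp.le _
    rw [lt_div_iff₀ (by positivity)] at hz
    have hz2 : z ^ θ = z * z ^ (-(1 - θ)) := by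
      nth_rw 2 [← Real.rpow_one z]
      rw [← Real.rpow_add hzp]; congr 1; ring
    have hz3 : z ^ θ * (2 * (|c| + 1)) < κ * z := by
      rw [hz2]; nlinarith
    simp only [Nat.cast_zero, zero_sub, abs_neg] at h1
    rw [abs_of_pos (by positivity)] at h1
    have : c * z ^ θ ≤ |c| * z ^ θ := by gcongr; exact le_abs_self c
    nlinarith [mul_pos hκ hzp]
  refine ⟨hfin, |c| + ({m | n m ≤ X}.ncard : ℝ) + κ * |X|, by positivity, ?_⟩
  intro y hy
  have hyθ : 1 ≤ y ^ θ := Real.one_le_rpow hy hθ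
  have hy0 : 0 < y := by linarith
  by_cases hXy : X ≤ y
  · refine (hX' y hXy hy).trans ?_
    gcongr
    have := le_abs_self c
    have : 0 ≤ κ * |X| := by positivity
    have : (0 : ℝ) ≤ ({m | n m ≤ X}.ncard : ℝ) := by positivity
    linarith
  · push Not at hXy
    have h1 : ({m | n m ≤ y}.ncard : ℝ) ≤ ({m | n m ≤ X}.ncard : ℝ) := by
      exact_mod_cast Set.ncard_le_ncard (fun m hm => le_trans hm hXy.le) (hfin X)
    have h2 : κ * y ≤ κ * |X| := by
      gcongr
      exact hXy.le.trans (le_abs_self X)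
    have h3 : (0 : ℝ) ≤ ({m | n m ≤ y}.ncard : ℝ) := by positivity
    have h4 : 0 < κ * y := by positivity
    have h5 : |({m | n m ≤ y}.ncard : ℝ) - κ * y| ≤ |c| + ({m | n m ≤ X}.ncard : ℝ) + κ * |X| := by
      have := abs_nonneg c
      rw [abs_le]; constructor <;> linarith
    refine h5.trans (le_mul_of_one_le_right (by positivity) hyθ)

lemma CB_of_star {μ : Type*} {n : μ → ℝ} (hn : ∀ m, 1 ≤ n m) {κ θ C0 : ℝ} (hκ : 0 < κ)
    (hθ1 : θ < 1) (hC0 : 0 ≤ C0) (hfin : ∀ y, {m | n m ≤ y}.Finite)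
    (hA : ∀ y, 1 ≤ y → |({m | n m ≤ y}.ncard : ℝ) - κ * y| ≤ C0 * y ^ θ) :
    CB n (κ + C0) 1 := by
  intro x hx F hF
  rw [Real.rpow_one]
  by_cases h1 : 1 ≤ x
  · have e : (F.card : ℝ) ≤ ({m | n m ≤ x}.ncard : ℝ) := by
      rw [← Set.ncard_coe_finset]
      exact_mod_cast Set.ncard_le_ncard (fun m hm => hF m hm) (hfin x)
    have := (abs_le.1 (hA x h1)).2
    have h2 : C0 * x ^ θ ≤ C0 * x := by
      gcongr
      simpa using Real.rpow_le_rpow_of_exponent_le h1 hθ1.le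
    linarith
  · have : F = ∅ := by
      apply Finset.eq_empty_of_forall_notMem
      intro a ha
      linarith [hF a ha, hn a]
    subst this
    simp only [Finset.card_empty, Nat.cast_zero]
    positivity

/-- Asymptotics for the counting function `T_h(x)`. -/
theorem Th_count {P : Type*} [Countable P] (N : P → ℕ)
    (hN : ∀ p, 2 ≤ N p) (κ θ : ℝ) (hstar : StarCond N κ θ)
    (h : ℕ) (hh : 2 ≤ h) :
    (fun x : ℝ =>
        ({a : Fin h → (P →₀ ℕ) |
            (∏ i, (Nm N (a i) : ℝ) ^ (h + (i : ℕ))) ≤ x}.ncard : ℝ)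
          - κ * (∏ i ∈ Finset.Icc 1 (h - 1), zetaM N (1 + (i : ℝ) / (h : ℝ))) *
              x ^ (1 / (h : ℝ)))
      =O[atTop] RNfull h θ := by
  obtain ⟨hκ, hθ, hθ1, hO⟩ := hstar
  have hn : ∀ m : P →₀ ℕ, (1 : ℝ) ≤ (Nm N m : ℝ) := by
    intro m
    have : 0 < Nm N m := by
      unfold Nm
      exact Finset.prod_pos (fun p _ => pow_pos (by have := hN p; omega) _)
    exact_mod_cast this
  obtain ⟨hfin, C0, hC0, hA⟩ := star_unpack hn hκ hθ hθ1 hO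
  have hI := CB_of_star hn hκ hθ1 hC0 hfin hA
  obtain ⟨k, rfl⟩ : ∃ k, h = k + 2 := ⟨h - 2, by omega⟩
  obtain ⟨D, D', hD, hD', hCB, hmain⟩ :=
    main_abs hn hκ (by positivity) hI hfin hA k (k+2) (by omega)
  have hzeta : ∏ i ∈ Finset.Icc 1 (k + 2 - 1), zetaM N (1 + (i : ℝ) / ((k + 2 : ℕ) : ℝ)) =
      ∑' b, fW (fun m => (Nm N m : ℝ)) (k + 2 + 1) (k + 1) b ^ (-(1 / ((k + 2 : ℕ) : ℝ))) := by
    have := hasSum_pi (k+1) (fun (j : Fin (k+1)) (m : P →₀ ℕ) =>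
      (Nm N m : ℝ) ^ (-(1 + ((j : ℕ) + 1 : ℝ) / ((k + 2 : ℕ) : ℝ))))
      (fun j m => by positivity)
      (fun j => CB_summable hI (by positivity) one_pos
        (by have : 0 < ((j : ℕ) + 1 : ℝ) / ((k + 2 : ℕ) : ℝ) := by positivity
            linarith) hn)
    have e : (fun b => fW (fun m => (Nm N m : ℝ)) (k + 2 + 1) (k + 1) b ^
        (-(1 / ((k + 2 : ℕ) : ℝ)))) = fun b : Fin (k+1) → (P →₀ ℕ) => ∏ j, (Nm N (b j) : ℝ) ^
          (-(1 + ((j : ℕ) + 1 : ℝ) / ((k + 2 : ℕ) : ℝ))) := by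
      funext b
      unfold fW
      rw [← Real.finset_prod_rpow _ _ (fun j _ => by positivity)]
      apply Finset.prod_congr rfl
      intro j _
      rw [← Real.rpow_natCast, ← Real.rpow_mul (by positivity)]
      congr 1
      push_cast
      field_simp
      ring
    rw [e, this.tsum_eq, show k + 2 - 1 = k + 1 by omega, ← Finset.Ico_succ_right_eq_Icc, Finset.prod_Ico_eq_prod_range,
      Finset.prod_range]
    apply Finset.prod_congr rfl
    intro j _
    unfold zetaM
    apply tsum_congr
    intro m
    rw [Real.rpow_neg (by positivity)]
    push_cast
    simp [add_comm]
  rw [hzeta]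
  set S := ∑' b, fW (fun m => (Nm N m : ℝ)) (k + 2 + 1) (k + 1) b ^ (-(1 / ((k + 2 : ℕ) : ℝ)))
  set h : ℕ := k + 2 with hh'
  have hh0 : (0 : ℝ) < h := by positivity
  set g := fW (fun m => (Nm N m : ℝ)) (h + 1) (k + 1) with hg
  have g1 : ∀ b, 1 ≤ g b := fW_one_le hn _ _
  have hp : 0 < 1 / ((h : ℝ) + 1) := by positivity
  have hσ0 : 0 ≤ θ / h := by positivity
  have hcmp : θ / h < 1 / ((h : ℝ) + 1) ↔ θ < (h : ℝ) / ((h : ℝ) + 1) := by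
    rw [div_lt_div_iff₀ hh0 (by positivity), lt_div_iff₀ (by positivity), one_mul]
  have hcmp2 : 1 / ((h : ℝ) + 1) < θ / h ↔ (h : ℝ) / ((h : ℝ) + 1) < θ := by
    rw [div_lt_div_iff₀ (by positivity) hh0, div_lt_iff₀ (by positivity), one_mul]
  have pw2 : ∀ x : ℝ, ∃ K : ℕ, x < 2 ^ K := fun x => pow_unbounded_of_one_lt x one_lt_two
  -- bound in the small case
  have small : θ < (h : ℝ) / ((h : ℝ) + 1) → ∃ A, 0 ≤ A ∧ ∀ x : ℝ, 1 ≤ x →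
      |({a : Fin h → (P →₀ ℕ) | (∏ i, (Nm N (a i) : ℝ) ^ (h + (i : ℕ))) ≤ x}.ncard : ℝ)
          - κ * S * x ^ (1 / (h : ℝ))| ≤ A * x ^ (1 / ((h : ℝ) + 1)) := by
    intro hlt
    rw [← hcmp] at hlt
    have h2 : (2 : ℝ) ^ (θ / h - 1 / ((h : ℝ) + 1)) < 1 :=
      Real.rpow_lt_one_of_one_lt_of_neg (by norm_num) (by linarith)
    have h3 : 0 ≤ D * 2 ^ (θ / h) / (1 - 2 ^ (θ / h - 1 / ((h : ℝ) + 1))) := by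
      apply div_nonneg (by positivity); linarith
    refine ⟨C0 * (D * 2 ^ (θ / h) / (1 - 2 ^ (θ / h - 1 / ((h : ℝ) + 1)))) + D',
      by positivity, ?_⟩
    intro x hx
    have hx0 : 0 < x := by linarith
    obtain ⟨B, hB, hb⟩ := hmain x hx
    obtain ⟨K, hK⟩ := pw2 x
    have := CB_trunc hCB hD hσ0 hlt g1 K x hx0 hK B hB
    refine hb.trans ?_
    rw [add_mul]
    refine add_le_add ?_ le_rfl
    calc _ ≤ C0 * x ^ (θ / h) * (D * 2 ^ (θ / h) / (1 - 2 ^ (θ / h - 1 / ((h : ℝ) + 1))) *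
          x ^ (1 / ((h : ℝ) + 1) - θ / h)) := by gcongr
      _ = C0 * (D * 2 ^ (θ / h) / (1 - 2 ^ (θ / h - 1 / ((h : ℝ) + 1)))) *
          (x ^ (θ / h) * x ^ (1 / ((h : ℝ) + 1) - θ / h)) := by ring
      _ = _ := by rw [← Real.rpow_add hx0]; congr 2; ring
  unfold RNfull
  by_cases c1 : (h : ℝ) / ((h : ℝ) + 1) < θ
  · simp only [c1, if_true]
    have hlt := hcmp2.2 c1
    have hs := CB_summable hCB hD hp hlt g1
    refine IsBigO.of_bound (C0 * (∑' b, g b ^ (-(θ / h))) + D') ?_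
    filter_upwards [eventually_ge_atTop 1] with x hx
    have hx0 : 0 < x := by linarith
    obtain ⟨B, hB, hb⟩ := hmain x hx
    rw [Real.norm_eq_abs, Real.norm_eq_abs, abs_of_nonneg (Real.rpow_nonneg hx0.le _)]
    refine hb.trans ?_
    rw [add_mul]
    have i1 : ∑ b ∈ B, g b ^ (-(θ / h)) ≤ ∑' b, g b ^ (-(θ / h)) :=
      hs.sum_le_tsum _ (fun b _ => Real.rpow_nonneg (by linarith [g1 b]) _)
    have i2 : x ^ (1 / ((h : ℝ) + 1)) ≤ x ^ (θ / h) :=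
      Real.rpow_le_rpow_of_exponent_le hx hlt.le
    calc _ ≤ C0 * x ^ (θ / h) * (∑' b, g b ^ (-(θ / h))) + D' * x ^ (θ / h) := by gcongr
      _ = _ := by ring
  · simp only [c1, if_false]
    push Not at c1
    by_cases c2 : ∃ i : ℕ, 1 ≤ i ∧ i ≤ h - 1 ∧ θ = (h : ℝ) / ((h : ℝ) + (i : ℝ))
    · simp only [c2, if_true]
      rcases c1.lt_or_eq with hlt | heq
      · obtain ⟨A, hA0, hAb⟩ := small hlt
        refine IsBigO.of_bound A ?_
        filter_upwards [eventually_ge_atTop 1, eventually_ge_atTop (Real.exp 1)] with x hx hxe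
        have hx0 : 0 < x := by linarith
        have hl : 1 ≤ Real.log x := by rwa [Real.le_log_iff_exp_le hx0]
        have hxp : 0 ≤ x ^ (1 / ((h : ℝ) + 1)) := Real.rpow_nonneg hx0.le _
        rw [Real.norm_eq_abs, Real.norm_eq_abs, abs_of_nonneg (mul_nonneg hxp (zero_le_one.trans hl))]
        refine (hAb x hx).trans ?_
        gcongr
        exact le_mul_of_one_le_right hxp hl
      · have hσ : θ / h = 1 / ((h : ℝ) + 1) := by rw [heq]; field_simp
        refine IsBigO.of_bound (C0 * (D * 2 ^ (1 / ((h : ℝ) + 1))) * (1 / Real.log 2 + 1) + D') ?_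
        filter_upwards [eventually_ge_atTop 1, eventually_ge_atTop (Real.exp 1)] with x hx hxe
        have hx0 : 0 < x := by linarith
        have hl : 1 ≤ Real.log x := by rwa [Real.le_log_iff_exp_le hx0]
        have hxp : 0 ≤ x ^ (1 / ((h : ℝ) + 1)) := Real.rpow_nonneg hx0.le _
        have hl2 : 0 < Real.log 2 := Real.log_pos one_lt_two
        rw [Real.norm_eq_abs, Real.norm_eq_abs, abs_of_nonneg (mul_nonneg hxp (zero_le_one.trans hl))]
        obtain ⟨B, hB, hb⟩ := hmain x hx
        have hK : x < 2 ^ (⌊Real.log x / Real.log 2⌋₊ + 1) := by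
          rw [← Real.log_lt_log_iff hx0 (by positivity), Real.log_pow, ← div_lt_iff₀ hl2]
          push_cast
          exact Nat.lt_floor_add_one _
        have := CB_log hCB hD hp.le g1 _ x hx0 hK B hB
        have hfl : ((⌊Real.log x / Real.log 2⌋₊ + 1 : ℕ) : ℝ) ≤
            (1 / Real.log 2 + 1) * Real.log x := by
          have := Nat.floor_le (a := Real.log x / Real.log 2) (by positivity)
          push_cast
          rw [add_mul, one_div_mul_eq_div]
          linarith
        refine hb.trans ?_
        rw [hσ, add_mul]
        refine add_le_add ?_ ?_
        · calc _ ≤ C0 * x ^ (1 / ((h : ℝ) + 1)) * (D * 2 ^ (1 / ((h : ℝ) + 1)) *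
                ((1 / Real.log 2 + 1) * Real.log x)) := by
                gcongr
                exact this.trans (by gcongr)
            _ = _ := by ring
        · gcongr
          exact le_mul_of_one_le_right hxp hl
    · simp only [c2, if_false]
      have hne : θ ≠ (h : ℝ) / ((h : ℝ) + 1) := by
        intro he
        exact c2 ⟨1, le_rfl, by omega, by simpa using he⟩
      obtain ⟨A, hA0, hAb⟩ := small (lt_of_le_of_ne c1 hne)
      refine IsBigO.of_bound A ?_
      filter_upwards [eventually_ge_atTop 1] with x hx
      rw [Real.norm_eq_abs, Real.norm_eq_abs,
        abs_of_nonneg (Real.rpow_nonneg (by linarith) _)]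
      exact hAb x hx
end
end
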